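/- arXiv:1806.07957 — 12 statements merged into one kernel-verified Lean document; each statement's English description precedes it below -/
import Mathlib

section
/- Let k ≥ 1, let w(λ,x) be a nonnegative weight function that is totally positive of order k, let f : [0,∞) → [0,∞) be non-decreasing and Borel-measurable, and let λ₁ > λ₂ > ⋯ > λ_k > 0. Assume that X is a nonnegative random variable with probability density g, that E[w(λ_i,X)(f(X))^p] is finite for all i = 1,…,k and p = 0,1,…,k−1, and that E[w(λ_i,X)] > 0 for each i. Then every square minor of the k×k matrix with (i,j) entry H[λ_i,(f(X))^{k−j}] is nonnegative; i.e., for every 1 ≤ m ≤ k and all row indices r₁ < ⋯ < r_m and column indices c₁ < ⋯ < c_m, det( (H[λ_{r_i}, (f(X))^{k−c_j}])_{i,j=1}^m ) ≥ 0. -/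
open MeasureTheory

theorem det_integral {m : ℕ} (μ : Fin m → Measure ℝ) [∀ i, SigmaFinite (μ i)]
    (φ : Fin m → Fin m → ℝ → ℝ) (h : ∀ i j, Integrable (φ i j) (μ i)) :
    Integrable (fun x : Fin m → ℝ => Matrix.det (Matrix.of fun i j => φ i j (x i))) (Measure.pi μ) ∧
    Matrix.det (Matrix.of fun i j => ∫ x, φ i j x ∂(μ i)) =
      ∫ x : Fin m → ℝ, Matrix.det (Matrix.of fun i j => φ i j (x i)) ∂(Measure.pi μ) := by
  have hI : ∀ σ : Equiv.Perm (Fin m), Integrable (fun x : Fin m → ℝ =>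
      ((Equiv.Perm.sign σ : ℤ) : ℝ) * ∏ i, φ i (σ i) (x i)) (Measure.pi μ) := by
    intro σ
    exact (Integrable.fintype_prod (f := fun i => φ i (σ i)) (fun i => h i (σ i))).const_mul _
  have e : ∀ M : Matrix (Fin m) (Fin m) ℝ, M.det = ∑ σ : Equiv.Perm (Fin m),
      ((Equiv.Perm.sign σ : ℤ) : ℝ) * ∏ i, M i (σ i) := by
    intro M
    rw [← Matrix.det_transpose, Matrix.det_apply']
    rfl
  simp_rw [e, Matrix.of_apply]
  refine ⟨integrable_finsetSum _ fun σ _ => hI σ, ?_⟩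
  rw [integral_finsetSum _ fun σ _ => hI σ]
  refine Finset.sum_congr rfl fun σ _ => ?_
  rw [integral_const_mul, integral_fintype_prod_eq_prod (f := fun i => φ i (σ i))]

theorem ae_pi_mem {m : ℕ} (S : Fin m → Set ℝ) (hS : ∀ i, MeasurableSet (S i)) :
    ∀ᵐ x ∂(Measure.pi fun i => (volume : Measure ℝ).restrict (S i)), ∀ i, x i ∈ S i := by
  rw [ae_all_iff]
  intro i
  exact Measure.tendsto_eval_ae_ae.eventually (ae_restrict_mem (hS i))

theorem genVand : ∀ (m : ℕ) (y : Fin m → ℝ) (p : Fin m → ℕ), (∀ i, 0 ≤ y i) → Monotone y →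
    StrictMono p → 0 ≤ Matrix.det (Matrix.of fun i j => y i ^ p j) := by
  intro m
  induction m with
  | zero => intro y p _ _ _; simp
  | succ m ih =>
    intro y p hy hm hp
    obtain ⟨q, hq⟩ : ∃ q : Fin (m+1) → ℕ, ∀ j, p j = p 0 + q j :=
      ⟨fun j => p j - p 0, fun j => by have := hp.monotone (Fin.zero_le j); show p j = p 0 + (p j - p 0); omega⟩
    have hq0 : q 0 = 0 := by have := hq 0; omega
    have hqm : StrictMono q := by
      intro a b hab
      have := hp hab
      rw [hq a, hq b] at this; omega
    have e1 : (Matrix.of fun i j => y i ^ p j) =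
        Matrix.of fun i j => (y i ^ p 0) * (Matrix.of fun i j => y i ^ q j) i j := by
      ext i j
      simp only [Matrix.of_apply]
      rw [hq j, pow_add]
    rw [e1, Matrix.det_mul_column]
    refine mul_nonneg (Finset.prod_nonneg fun i _ => pow_nonneg (hy i) _) ?_
    set B : Matrix (Fin (m+1)) (Fin (m+1)) ℝ := Matrix.of (Fin.cons (fun j => y 0 ^ q j)
      (fun (i : Fin m) j => y i.succ ^ q j - y i.castSucc ^ q j)) with hB
    have e2 : (Matrix.of fun i j => y i ^ q j).det = B.det := by
      refine Matrix.det_eq_of_forall_row_eq_smul_add_pred (fun _ => 1) ?_ ?_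
      · intro j; simp [hB]
      · intro i j; simp [hB]
    have hB0 : ∀ i : Fin m, B i.succ 0 = 0 := by intro i; simp [hB, hq0]
    have e3 : B.det = Matrix.det (Matrix.of fun i j : Fin m =>
        ∫ t in Set.Ioc (y i.castSucc) (y i.succ), (q j.succ : ℝ) * t ^ (q j.succ - 1)) := by
      rw [Matrix.det_succ_column_zero, Fin.sum_univ_succ]
      simp only [hB0]
      simp only [mul_zero, zero_mul, Finset.sum_const_zero, add_zero]
      have : B 0 0 = 1 := by simp [hB, hq0]
      rw [this]
      simp only [Fin.val_zero, pow_zero, one_mul]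
      congr 1
      ext i j
      have hle : y i.castSucc ≤ y i.succ := hm (Fin.castSucc_lt_succ).le
      have hpos : 0 < q j.succ := by
        have := hqm (Fin.succ_pos j); omega
      simp only [Matrix.of_apply, Matrix.submatrix_apply]
      rw [← intervalIntegral.integral_of_le hle, intervalIntegral.integral_const_mul, integral_pow]
      have : q j.succ - 1 + 1 = q j.succ := by omega
      rw [this]
      have h2 : ((q j.succ - 1 : ℕ) : ℝ) + 1 = q j.succ := by exact_mod_cast this
      rw [h2]
      have : (q j.succ : ℝ) ≠ 0 := by positivity
      field_simp
      simp [hB]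
    rw [e2, e3]
    rw [(det_integral (fun i : Fin m => volume.restrict (Set.Ioc (y i.castSucc) (y i.succ)))
      (fun i j t => (q j.succ : ℝ) * t ^ (q j.succ - 1)) ?_).2]
    · refine integral_nonneg_of_ae ?_
      filter_upwards [ae_pi_mem (fun i : Fin m => Set.Ioc (y i.castSucc) (y i.succ))
        (fun i => measurableSet_Ioc)] with t ht
      have e4 := Matrix.det_mul_row (fun j : Fin m => (q j.succ : ℝ))
        (Matrix.of fun i j => t i ^ (q j.succ - 1))
      simp only [Matrix.of_apply] at e4
      simp only [Pi.zero_apply]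
      rw [e4]
      refine mul_nonneg (Finset.prod_nonneg fun i _ => by positivity) ?_
      refine ih t _ (fun i => (hy _).trans (ht i).1.le) ?_ ?_
      · intro a b hab
        rcases hab.eq_or_lt with rfl | hab
        · exact le_rfl
        · refine (ht a).2.trans (le_trans (hm ?_) (ht b).1.le)
          exact Fin.succ_le_castSucc_iff.2 hab
      · intro a b hab
        have h1 := hqm (Fin.succ_lt_succ_iff.2 hab)
        have h2 := hqm (Fin.succ_pos a)
        show q a.succ - 1 < q b.succ - 1
        omega
    · intro i j
      have : Continuous fun t : ℝ => (q j.succ : ℝ) * t ^ (q j.succ - 1) := by fun_prop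
      exact (this.integrableOn_Ioc)

theorem genVand_anti (m : ℕ) (y : Fin m → ℝ) (p : Fin m → ℕ) (hy : ∀ i, 0 ≤ y i)
    (hm : Antitone y) (hp : StrictAnti p) :
    0 ≤ Matrix.det (Matrix.of fun i j => y i ^ p j) := by
  have := genVand m (y ∘ Fin.rev) (p ∘ Fin.rev) (fun i => hy _)
    (fun a b h => hm (Fin.rev_le_rev.2 h)) (fun a b h => hp (Fin.rev_lt_rev.2 h))
  rw [← Matrix.det_submatrix_equiv_self Fin.revPerm]
  exact this

theorem andreief_nonneg {m : ℕ} (μ : Measure ℝ) [SigmaFinite μ] (φ ψ : Fin m → ℝ → ℝ)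
    (h : ∀ i j, Integrable (fun x => φ i x * ψ j x) μ)
    (hpos : ∀ᵐ x ∂(Measure.pi fun _ : Fin m => μ),
      0 ≤ Matrix.det (Matrix.of fun i j => φ i (x j)) * Matrix.det (Matrix.of fun i j => ψ j (x i))) :
    0 ≤ Matrix.det (Matrix.of fun i j => ∫ x, φ i x * ψ j x ∂μ) := by
  obtain ⟨hI, he⟩ := det_integral (fun _ : Fin m => μ) (fun i j x => φ i x * ψ j x) h
  rw [he]
  set F : (Fin m → ℝ) → ℝ := fun x => Matrix.det (Matrix.of fun i j => φ i (x i) * ψ j (x i)) with hF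
  have hmp : ∀ σ : Equiv.Perm (Fin m), MeasurePreserving (fun x : Fin m → ℝ => x ∘ σ)
      (Measure.pi fun _ : Fin m => μ) (Measure.pi fun _ : Fin m => μ) := by
    intro σ
    have := measurePreserving_piCongrLeft (fun _ : Fin m => μ) σ.symm
    convert this using 1
    ext x i
    have := MeasurableEquiv.piCongrLeft_apply_apply (β := fun _ : Fin m => ℝ) σ.symm x (σ i)
    simpa using this.symm
  have hs : ∀ σ : Equiv.Perm (Fin m), ∫ x, F (x ∘ σ) ∂(Measure.pi fun _ : Fin m => μ) =
      ∫ x, F x ∂(Measure.pi fun _ : Fin m => μ) := by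
    intro σ
    have hm := (hmp σ).map_eq
    conv_rhs => rw [← hm]
    rw [integral_map (hmp σ).measurable.aemeasurable]
    rw [hm]
    exact hI.aestronglyMeasurable
  have hIs : ∀ σ : Equiv.Perm (Fin m), Integrable (fun x => F (x ∘ σ)) (Measure.pi fun _ : Fin m => μ) :=
    fun σ => (hmp σ).integrable_comp_of_integrable hI
  have hsum : ∀ x, ∑ σ : Equiv.Perm (Fin m), F (x ∘ σ) =
      Matrix.det (Matrix.of fun i j => φ i (x j)) * Matrix.det (Matrix.of fun i j => ψ j (x i)) := by
    intro x
    rw [← Matrix.det_transpose (Matrix.of fun i j => φ i (x j)), Matrix.det_apply', Finset.sum_mul]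
    refine Finset.sum_congr rfl fun σ _ => ?_
    have e4 := Matrix.det_mul_column (fun i : Fin m => φ i (x (σ i)))
        ((Matrix.of fun i j => ψ j (x i)).submatrix σ id)
    rw [Matrix.det_permute] at e4
    simp only [Matrix.of_apply, Matrix.submatrix_apply, id] at e4
    simp only [hF, Function.comp]
    rw [e4]
    simp only [Matrix.transpose_apply, Matrix.of_apply]
    ring
  have htot : (Fintype.card (Equiv.Perm (Fin m)) : ℝ) * ∫ x, F x ∂(Measure.pi fun _ : Fin m => μ) =
      ∫ x, Matrix.det (Matrix.of fun i j => φ i (x j)) * Matrix.det (Matrix.of fun i j => ψ j (x i))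
        ∂(Measure.pi fun _ : Fin m => μ) := by
    simp_rw [← hsum]
    rw [integral_finsetSum _ fun σ _ => hIs σ]
    simp_rw [hs]
    simp
  have h1 := integral_nonneg_of_ae hpos
  rw [← htot] at h1
  exact nonneg_of_mul_nonneg_right h1 (by exact_mod_cast Fintype.card_pos)

theorem sort_nonneg {m : ℕ} (φ ψ : Fin m → ℝ → ℝ) (x : Fin m → ℝ) (S : Set ℝ) (hx : ∀ i, x i ∈ S)
    (h : ∀ y : Fin m → ℝ, (∀ i, y i ∈ S) → StrictAnti y →
      0 ≤ Matrix.det (Matrix.of fun i j => φ i (y j)) ∧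
      0 ≤ Matrix.det (Matrix.of fun i j => ψ j (y i))) :
    0 ≤ Matrix.det (Matrix.of fun i j => φ i (x j)) *
      Matrix.det (Matrix.of fun i j => ψ j (x i)) := by
  by_cases hinj : Function.Injective x
  · set σ : Equiv.Perm (Fin m) := Tuple.sort (fun i => - x i)
    have hmono : Monotone ((fun i => - x i) ∘ σ) := Tuple.monotone_sort _
    have hanti : StrictAnti (x ∘ σ) := by
      have ha : Antitone (x ∘ σ) := fun a b hab => by
        have := hmono hab
        simp only [Function.comp] at this ⊢
        linarith
      exact ha.strictAnti_of_injective (hinj.comp σ.injective)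
    obtain ⟨h1, h2⟩ := h (x ∘ σ) (fun i => hx _) hanti
    have e1 := Matrix.det_permute' σ (Matrix.of fun i j => φ i (x j))
    have e2 := Matrix.det_permute σ (Matrix.of fun i j => ψ j (x i))
    have h3 := mul_nonneg h1 h2
    change 0 ≤ ((Matrix.of fun i j => φ i (x j)).submatrix id σ).det *
      ((Matrix.of fun i j => ψ j (x i)).submatrix σ id).det at h3
    rw [e1, e2] at h3
    have hsg : ((Equiv.Perm.sign σ : ℤ) : ℝ) * ((Equiv.Perm.sign σ : ℤ) : ℝ) = 1 := by
      rcases Int.units_eq_one_or (Equiv.Perm.sign σ) with h | h <;> simp [h]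
    rw [mul_mul_mul_comm, hsg, one_mul] at h3
    exact h3
  · simp only [Function.Injective, not_forall] at hinj
    obtain ⟨a, b, hab, hne⟩ := hinj
    rw [Matrix.det_zero_of_row_eq (M := Matrix.of fun i j => ψ j (x i)) hne (by ext j; simp [hab])]
    simp

/-- If the weight function `w` is totally positive of order `k`,
`f : [0,∞) → [0,∞)` is non-decreasing and Borel measurable, `λ₁ > ⋯ > λ_k > 0`,
and the relevant expectations are finite with positive denominators, then every square
minor of the `k × k` matrix with `(i,j)` entry `H[λ_i, (f(X))^{k-j}]` is nonnegative. -/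
theorem stmt_0
    (k : ℕ) (hk : 1 ≤ k)
    (w : ℝ → ℝ → ℝ) (hw_nonneg : ∀ l x : ℝ, 0 ≤ w l x)
    (hTP : ∀ r : ℕ, 1 ≤ r → r ≤ k → ∀ l x : Fin r → ℝ,
      (∀ i j : Fin r, i < j → l j < l i) →
      (∀ i j : Fin r, i < j → x j < x i) →
      0 ≤ Matrix.det (Matrix.of fun i j : Fin r => w (l i) (x j)))
    (f : ℝ → ℝ) (hf_nonneg : ∀ x : ℝ, 0 ≤ x → 0 ≤ f x)
    (hf_mono : ∀ x y : ℝ, 0 ≤ x → x ≤ y → f x ≤ f y)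
    (hf_meas : Measurable f)
    (lam : Fin k → ℝ) (hlam_pos : ∀ i : Fin k, 0 < lam i)
    (hlam_anti : ∀ i j : Fin k, i < j → lam j < lam i)
    (g : ℝ → ℝ) (hg_nonneg : ∀ x : ℝ, 0 ≤ g x) (hg_meas : Measurable g)
    (hg_prob : ∫ x in Set.Ici (0:ℝ), g x = 1)
    (hInt : ∀ (i : Fin k) (p : ℕ), p ≤ k - 1 →
      IntegrableOn (fun x => w (lam i) x * f x ^ p * g x) (Set.Ici 0))
    (hden_pos : ∀ i : Fin k, 0 < ∫ x in Set.Ici (0:ℝ), w (lam i) x * g x) :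
    ∀ m : ℕ, 1 ≤ m → m ≤ k → ∀ r c : Fin m → Fin k,
      (∀ i j : Fin m, i < j → r i < r j) →
      (∀ i j : Fin m, i < j → c i < c j) →
      0 ≤ Matrix.det (Matrix.of fun i j : Fin m =>
        (∫ x in Set.Ici (0:ℝ), w (lam (r i)) x * f x ^ (k - 1 - (c j : ℕ)) * g x) /
        (∫ x in Set.Ici (0:ℝ), w (lam (r i)) x * g x)) := by
  intro m hm1 hmk r c hr hc
  set μ : Measure ℝ := volume.restrict (Set.Ici (0:ℝ)) with hμ
  have hmain : 0 ≤ Matrix.det (Matrix.of fun i j : Fin m =>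
      ∫ x, (w (lam (r i)) x * g x) * f x ^ (k - 1 - (c j : ℕ)) ∂μ) := by
    refine andreief_nonneg μ (fun i x => w (lam (r i)) x * g x)
      (fun j x => f x ^ (k - 1 - (c j : ℕ))) ?_ ?_
    · intro i j
      refine (hInt (r i) (k - 1 - (c j : ℕ)) (Nat.sub_le _ _)).congr ?_
      refine Filter.Eventually.of_forall fun x => ?_
      show w (lam (r i)) x * f x ^ (k - 1 - (c j : ℕ)) * g x = _
      ring
    · filter_upwards [ae_pi_mem (fun _ : Fin m => Set.Ici (0:ℝ)) (fun _ => measurableSet_Ici)]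
        with x hx
      refine sort_nonneg (fun i x => w (lam (r i)) x * g x)
        (fun j x => f x ^ (k - 1 - (c j : ℕ))) x (Set.Ici 0) hx ?_
      intro y hy hya
      constructor
      · have e := Matrix.det_mul_row (fun j : Fin m => g (y j))
          (Matrix.of fun i j : Fin m => w (lam (r i)) (y j))
        simp only [Matrix.of_apply] at e
        simp_rw [mul_comm _ (g _)]
        rw [e]
        refine mul_nonneg (Finset.prod_nonneg fun i _ => hg_nonneg _) ?_
        exact hTP m hm1 hmk (fun i => lam (r i)) y (fun i j hij => hlam_anti _ _ (hr i j hij))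
          (fun i j hij => hya hij)
      · refine genVand_anti m (fun i => f (y i)) (fun j => k - 1 - (c j : ℕ))
          (fun i => hf_nonneg _ (hy i)) (fun a b hab => hf_mono _ _ (hy b) (hya.antitone hab)) ?_
        intro a b hab
        have h1 : (c a : ℕ) < (c b : ℕ) := hc a b hab
        have h2 := (c b).isLt
        show k - 1 - (c b : ℕ) < k - 1 - (c a : ℕ)
        omega
  have e := Matrix.det_mul_column (fun i : Fin m => (∫ x, w (lam (r i)) x * g x ∂μ)⁻¹)
    (Matrix.of fun i j : Fin m => ∫ x, (w (lam (r i)) x * g x) * f x ^ (k - 1 - (c j : ℕ)) ∂μ)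
  simp only [Matrix.of_apply] at e
  have e' : (Matrix.of fun i j : Fin m =>
        (∫ x, w (lam (r i)) x * f x ^ (k - 1 - (c j : ℕ)) * g x ∂μ) /
        (∫ x, w (lam (r i)) x * g x ∂μ)) = Matrix.of fun i j : Fin m =>
        (∫ x, w (lam (r i)) x * g x ∂μ)⁻¹ *
        ∫ x, (w (lam (r i)) x * g x) * f x ^ (k - 1 - (c j : ℕ)) ∂μ := by
    ext i j
    simp only [Matrix.of_apply]
    rw [div_eq_inv_mul]
    congr 2
    ext x
    ring
  rw [e', e]
  exact mul_nonneg (Finset.prod_nonneg fun i _ => inv_nonneg.2 (hden_pos _).le) hmain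
end

section
/- Let k ≥ 1, let w(λ,x) be a nonnegative weight function that is strictly totally positive of order k, let f : [0,∞) → [0,∞) be non-decreasing, Borel-measurable, and strictly increasing on some nonempty open interval, and let λ₁ > λ₂ > ⋯ > λ_k > 0. Assume that X is a nonnegative random variable whose probability density g is strictly positive on (0,∞), that E[w(λ_i,X)(f(X))^p] is finite for all i = 1,…,k and p = 0,1,…,k−1, and that E[w(λ_i,X)] > 0 for each i. Then every square minor of the k×k matrix with (i,j) entry H[λ_i,(f(X))^{k−j}] is strictly positive. -/
open MeasureTheory

lemma signVar_lt_card (P : Polynomial ℝ) (hP : P ≠ 0) : P.signVariations + 1 ≤ P.support.card := by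
  induction h : P.support.card using Nat.strong_induction_on generalizing P with
  | _ n ih =>
    subst h
    by_cases he : P.eraseLead = 0
    · have h1 : P = Polynomial.monomial P.natDegree P.leadingCoeff := by
        conv_lhs => rw [← Polynomial.eraseLead_add_monomial_natDegree_leadingCoeff P, he, zero_add]
      have h2 : P.signVariations = 0 := by
        rw [h1]; exact Polynomial.signVariations_monomial _ _
      have h3 : 0 < P.support.card := by
        rw [Finset.card_pos]; exact Polynomial.nonempty_support_iff.mpr hP
      omega
    · have h1 := Polynomial.eraseLead_support_card_lt hP
      have h2 := ih _ h1 P.eraseLead he rfl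
      have h3 := Polynomial.signVariations_le_eraseLead_succ (P := P)
      omega

lemma pos_roots_lt (P : Polynomial ℝ) (hP : P ≠ 0) (s : Finset ℝ)
    (hs : ∀ x ∈ s, 0 < x ∧ P.eval x = 0) : s.card + 1 ≤ P.support.card := by
  refine le_trans ?_ (signVar_lt_card P hP)
  have h1 := Polynomial.roots_countP_pos_le_signVariations (P := P)
  have h2 : s.card ≤ P.roots.countP (0 < ·) := by
    rw [Multiset.countP_eq_card_filter]
    have : s.val ≤ P.roots.filter (0 < ·) := by
      rw [Multiset.le_iff_subset s.nodup]
      intro x hx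
      rw [Multiset.mem_filter, Polynomial.mem_roots hP]
      exact ⟨(hs x hx).2, (hs x hx).1⟩
    exact Multiset.card_le_card this
  omega

lemma genVand_pos (n : ℕ) (y : Fin n → ℝ) (p : Fin n → ℕ) (hy : StrictAnti y)
    (hy0 : ∀ i, 0 < y i) (hp : StrictAnti p) :
    0 < Matrix.det (Matrix.of fun i j => y i ^ p j) := by
  induction n with
  | zero => simp
  | succ n ih =>
    let M : ℝ → Matrix (Fin (n+1)) (Fin (n+1)) ℝ :=
      fun t => Matrix.of fun i j => (Fin.cons t (Fin.tail y) : Fin (n+1) → ℝ) i ^ p j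
    let c : Fin (n+1) → ℝ := fun j => (-1) ^ (j:ℕ) *
      Matrix.det (Matrix.of fun (i k : Fin n) => y i.succ ^ p (j.succAbove k))
    let P : Polynomial ℝ := ∑ j, Polynomial.monomial (p j) (c j)
    have hPe : ∀ t, P.eval t = (M t).det := by
      intro t
      rw [Matrix.det_succ_row_zero]
      simp only [P, Polynomial.eval_finsetSum, Polynomial.eval_monomial]
      refine Finset.sum_congr rfl fun j _ => ?_
      simp only [c, M, Matrix.of_apply, Fin.cons_zero]
      have : (Matrix.of fun (i k : Fin n) => y i.succ ^ p (j.succAbove k)) = 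
        (Matrix.of fun i j => (Fin.cons t (Fin.tail y) : Fin (n+1) → ℝ) i ^ p j).submatrix Fin.succ j.succAbove := by
        ext i k; simp [Fin.tail]
      rw [this]; ring
    have hc0 : 0 < c 0 := by
      have := ih (fun i => y i.succ) (fun i => p i.succ) (fun a b h => hy (by simpa using h))
        (fun i => hy0 _) (fun a b h => hp (by simpa using h))
      simpa [c] using this
    have hcoef : P.coeff (p 0) = c 0 := by
      simp only [P, Polynomial.finsetSum_coeff, Polynomial.coeff_monomial, hp.injective.eq_iff]
      simp
    have hP : P ≠ 0 := by
      intro h; rw [h] at hcoef; simp at hcoef; linarith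
    have hsupp : P.support ⊆ Finset.univ.image p := by
      intro q hq
      rw [Polynomial.mem_support_iff] at hq
      by_contra hcon
      apply hq
      simp only [P, Polynomial.finsetSum_coeff, Polynomial.coeff_monomial]
      refine Finset.sum_eq_zero fun j _ => if_neg ?_
      rintro rfl
      exact hcon (Finset.mem_image_of_mem _ (Finset.mem_univ _))
    have hcard : P.support.card ≤ n + 1 :=
      (Finset.card_le_card hsupp).trans (Finset.card_image_le.trans (by simp))
    have hroot : ∀ t, y 0 ≤ t → P.eval t ≠ 0 := by
      intro t ht h0
      have hr : ∀ i : Fin n, P.eval (y i.succ) = 0 := by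
        intro i
        rw [hPe]
        refine Matrix.det_zero_of_row_eq (i := 0) (j := i.succ) (Fin.succ_ne_zero i).symm ?_
        ext k; simp [M, Fin.tail]
      have hni : t ∉ Finset.univ.image (fun i : Fin n => y i.succ) := by
        intro hm
        obtain ⟨i, -, hi⟩ := Finset.mem_image.mp hm
        have := hy (Fin.succ_pos i)
        linarith
      have := pos_roots_lt P hP (insert t (Finset.univ.image (fun i : Fin n => y i.succ))) (by
        intro x hx
        rcases Finset.mem_insert.mp hx with rfl | hx
        · exact ⟨(hy0 0).trans_le ht, h0⟩
        · obtain ⟨i, -, rfl⟩ := Finset.mem_image.mp hx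
          exact ⟨hy0 _, hr i⟩)
      rw [Finset.card_insert_of_notMem hni, Finset.card_image_of_injective _
        (fun a b h => Fin.succ_injective _ (hy.injective h))] at this
      simp at this
      omega
    have hM : (Matrix.of fun i j => y i ^ p j) = M (y 0) := by
      simp [M, Fin.cons_self_tail]
    rw [hM, ← hPe]
    rcases Nat.eq_zero_or_pos n with rfl | hn
    · simp [P] 
      exact mul_pos hc0 (pow_pos (hy0 0) _)
    · have hdeg : P.natDegree = p 0 := by
        apply le_antisymm
        · rw [Polynomial.natDegree_le_iff_coeff_eq_zero]
          intro q hq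
          by_contra hne
          obtain ⟨j, -, rfl⟩ := Finset.mem_image.mp (hsupp (Polynomial.mem_support_iff.mpr hne))
          have := hp.antitone (Fin.zero_le j)
          omega
        · exact Polynomial.le_natDegree_of_ne_zero (by rw [hcoef]; exact hc0.ne')
      have hp0 : 0 < p 0 := lt_of_le_of_lt (Nat.zero_le _) (hp (show (0 : Fin (n+1)) < Fin.last n from by
        rw [Fin.lt_def]; simpa using hn))
      have ht := P.tendsto_atTop_of_leadingCoeff_nonneg
        (Polynomial.natDegree_pos_iff_degree_pos.mp (hdeg ▸ hp0))
        (by rw [Polynomial.leadingCoeff, hdeg, hcoef]; exact hc0.le)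
      by_contra hneg
      have hlt : P.eval (y 0) < 0 := lt_of_le_of_ne (not_lt.mp hneg) (hroot _ le_rfl)
      obtain ⟨t, ht1, ht2⟩ := ((ht.eventually_ge_atTop 0).and (Filter.eventually_ge_atTop (y 0))).exists
      obtain ⟨z, hz, hz0⟩ := intermediate_value_Icc ht2 (P.continuous.continuousOn) ⟨hlt.le, ht1⟩
      exact hroot z hz.1 hz0

lemma genVand_nonneg (n : ℕ) (y : Fin n → ℝ) (p : Fin n → ℕ) (hy : Antitone y)
    (hy0 : ∀ i, 0 ≤ y i) (hp : StrictAnti p) :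
    0 ≤ Matrix.det (Matrix.of fun i j => y i ^ p j) := by
  by_cases hs : Function.Injective y
  · have hy' : StrictAnti y := hy.strictAnti_of_injective hs
    have hc : Continuous fun e : ℝ => Matrix.det (Matrix.of fun i j => (y i + e) ^ p j) := by
      apply Continuous.matrix_det
      fun_prop
    have h1 : Filter.Tendsto (fun e : ℝ => Matrix.det (Matrix.of fun i j => (y i + e) ^ p j))
        (nhdsWithin 0 (Set.Ioi 0)) (nhds (Matrix.det (Matrix.of fun i j => y i ^ p j))) := by
      have := (hc.tendsto 0).mono_left (nhdsWithin_le_nhds (s := Set.Ioi 0))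
      simpa using this
    refine ge_of_tendsto h1 ?_
    filter_upwards [self_mem_nhdsWithin] with e he
    have he : 0 < e := he
    exact (genVand_pos n (fun i => y i + e) p (fun a b h => by simpa using hy' h)
      (fun i => by have := hy0 i; positivity) hp).le
  · simp only [Function.Injective, not_forall] at hs
    obtain ⟨a, b, hab, hne⟩ := hs
    refine le_of_eq (Matrix.det_zero_of_row_eq hne ?_).symm
    ext k; simp [hab]

/-- Andreief identity. -/
lemma andreief {n : ℕ} (μ : Measure ℝ) [SigmaFinite μ] (φ ψ : Fin n → ℝ → ℝ)
    (h : ∀ i j, Integrable (fun x => φ i x * ψ j x) μ) :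
    Integrable (fun x : Fin n → ℝ => Matrix.det (Matrix.of fun i j => φ i (x j)) *
      Matrix.det (Matrix.of fun i j => ψ j (x i))) (Measure.pi fun _ => μ) ∧
    ∫ x : Fin n → ℝ, Matrix.det (Matrix.of fun i j => φ i (x j)) *
      Matrix.det (Matrix.of fun i j => ψ j (x i)) ∂(Measure.pi fun _ => μ)
    = (n.factorial : ℝ) * Matrix.det (Matrix.of fun i j => ∫ x, φ i x * ψ j x ∂μ) := by
  classical
  let F : (Fin n → ℝ) → ℝ := fun x => ∑ τ : Equiv.Perm (Fin n),
    ((Equiv.Perm.sign τ : ℤ) : ℝ) * ∏ j, (φ (τ j) (x j) * ψ j (x j))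
  have hFi' : ∀ τ : Equiv.Perm (Fin n), Integrable (fun x : Fin n → ℝ => 
      ((Equiv.Perm.sign τ : ℤ) : ℝ) * ∏ j, (φ (τ j) (x j) * ψ j (x j))) (Measure.pi fun _ => μ) := by
    intro τ
    exact (Integrable.fintype_prod (f := fun j x => φ (τ j) x * ψ j x) (fun j => h _ _)).const_mul _
  have hFi : Integrable F (Measure.pi fun _ => μ) := integrable_finsetSum _ fun τ _ => hFi' τ
  have hFint : ∫ x, F x ∂(Measure.pi fun _ => μ) =
      Matrix.det (Matrix.of fun i j => ∫ x, φ i x * ψ j x ∂μ) := by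
    rw [integral_finsetSum _ fun τ _ => hFi' τ, Matrix.det_apply']
    refine Finset.sum_congr rfl fun τ _ => ?_
    rw [integral_const_mul, integral_fintype_prod_eq_prod (fun j x => φ (τ j) x * ψ j x)]
    simp
  have hFdet : ∀ x, F x = Matrix.det (Matrix.of fun i j => φ i (x j)) * ∏ j, ψ j (x j) := by
    intro x
    rw [Matrix.det_apply', Finset.sum_mul]
    refine Finset.sum_congr rfl fun τ _ => ?_
    rw [Finset.prod_mul_distrib]; simp [mul_assoc]
  have hpc : ∀ σ : Equiv.Perm (Fin n), (fun x : Fin n → ℝ => x ∘ σ) =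
      ⇑(MeasurableEquiv.piCongrLeft (fun _ : Fin n => ℝ) σ.symm) := by
    intro σ
    ext x i
    obtain ⟨k, rfl⟩ := σ.symm.surjective i
    rw [MeasurableEquiv.coe_piCongrLeft, Equiv.piCongrLeft_apply_apply]
    simp
  have hmp : ∀ σ : Equiv.Perm (Fin n), MeasurePreserving (fun x : Fin n → ℝ => x ∘ σ)
      (Measure.pi fun _ => μ) (Measure.pi fun _ => μ) := by
    intro σ
    have := measurePreserving_piCongrLeft (α := fun _ : Fin n => ℝ) (fun _ => μ) σ.symm
    rw [hpc]; exact this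
  have hme : ∀ σ : Equiv.Perm (Fin n), MeasurableEmbedding (fun x : Fin n → ℝ => x ∘ σ) := by
    intro σ
    rw [hpc]
    exact (MeasurableEquiv.piCongrLeft (fun _ : Fin n => ℝ) σ.symm).measurableEmbedding
  have hsum : (fun x : Fin n → ℝ => Matrix.det (Matrix.of fun i j => φ i (x j)) *
      Matrix.det (Matrix.of fun i j => ψ j (x i))) = 
      fun x => ∑ σ : Equiv.Perm (Fin n), F (x ∘ σ) := by
    ext x
    rw [Matrix.det_apply' (Matrix.of fun i j => ψ j (x i)), Finset.mul_sum]
    refine Finset.sum_congr rfl fun σ _ => ?_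
    rw [hFdet]
    have := Matrix.det_permute' σ (Matrix.of fun i j => φ i (x j))
    have h2 : (Matrix.of fun i j => φ i ((x ∘ σ) j)) =
      (Matrix.of fun i j => φ i (x j)).submatrix id σ := by ext; simp
    rw [h2, this]
    simp; ring
  have hi : ∀ σ : Equiv.Perm (Fin n), Integrable (fun x => F (x ∘ σ)) (Measure.pi fun _ => μ) :=
    fun σ => (hmp σ).integrable_comp_of_integrable hFi
  constructor
  · rw [hsum]
    exact integrable_finsetSum _ fun σ _ => hi σ
  · rw [hsum, integral_finsetSum _ fun σ _ => hi σ]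
    have : ∀ σ : Equiv.Perm (Fin n), ∫ x, F (x ∘ σ) ∂(Measure.pi fun _ => μ) =
      ∫ x, F x ∂(Measure.pi fun _ => μ) := fun σ => (hmp σ).integral_comp (hme σ) F
    simp [this, hFint, Fintype.card_perm]



/-- If the weight function `w` is strictly totally positive of order `k`,
`f : [0,∞) → [0,∞)` is non-decreasing, Borel measurable, and strictly increasing on some
nonempty open interval, `λ₁ > ⋯ > λ_k > 0`, the density `g` is strictly positive on `(0,∞)`,
and the relevant expectations are finite with positive denominators, then every square minor
of the `k × k` matrix with `(i,j)` entry `H[λ_i, (f(X))^{k-j}]` is strictly positive. -/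
theorem stmt_1
    (k : ℕ) (hk : 1 ≤ k)
    (w : ℝ → ℝ → ℝ) (hw_nonneg : ∀ l x : ℝ, 0 ≤ w l x)
    (hSTP : ∀ r : ℕ, 1 ≤ r → r ≤ k → ∀ l x : Fin r → ℝ,
      (∀ i j : Fin r, i < j → l j < l i) →
      (∀ i j : Fin r, i < j → x j < x i) →
      0 < Matrix.det (Matrix.of fun i j : Fin r => w (l i) (x j)))
    (f : ℝ → ℝ) (hf_nonneg : ∀ x : ℝ, 0 ≤ x → 0 ≤ f x)
    (hf_mono : ∀ x y : ℝ, 0 ≤ x → x ≤ y → f x ≤ f y)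
    (hf_meas : Measurable f)
    (hf_strict : ∃ a b : ℝ, 0 ≤ a ∧ a < b ∧
      ∀ x y : ℝ, a < x → x < y → y < b → f x < f y)
    (lam : Fin k → ℝ) (hlam_pos : ∀ i : Fin k, 0 < lam i)
    (hlam_anti : ∀ i j : Fin k, i < j → lam j < lam i)
    (g : ℝ → ℝ) (hg_nonneg : ∀ x : ℝ, 0 ≤ g x)
    (hg_pos : ∀ x : ℝ, 0 < x → 0 < g x)
    (hg_meas : Measurable g)
    (hg_prob : ∫ x in Set.Ici (0:ℝ), g x = 1)
    (hInt : ∀ (i : Fin k) (p : ℕ), p ≤ k - 1 →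
      IntegrableOn (fun x => w (lam i) x * f x ^ p * g x) (Set.Ici 0))
    (hden_pos : ∀ i : Fin k, 0 < ∫ x in Set.Ici (0:ℝ), w (lam i) x * g x) :
    ∀ m : ℕ, 1 ≤ m → m ≤ k → ∀ r c : Fin m → Fin k,
      (∀ i j : Fin m, i < j → r i < r j) →
      (∀ i j : Fin m, i < j → c i < c j) →
      0 < Matrix.det (Matrix.of fun i j : Fin m =>
        (∫ x in Set.Ici (0:ℝ), w (lam (r i)) x * f x ^ (k - 1 - (c j : ℕ)) * g x) /
        (∫ x in Set.Ici (0:ℝ), w (lam (r i)) x * g x)) := by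
  intro m hm hmk r c hr hc
  let p : Fin m → ℕ := fun j => k - 1 - (c j : ℕ)
  have hp : StrictAnti p := by
    intro i j hij
    have h1 := hc i j hij
    have h2 := (c j).2
    rw [Fin.lt_def] at h1
    simp only [p]; omega
  let μ : Measure ℝ := volume.restrict (Set.Ici 0)
  let φ : Fin m → ℝ → ℝ := fun i x => w (lam (r i)) x * g x
  let ψ : Fin m → ℝ → ℝ := fun j x => f x ^ p j
  have hφψ : ∀ i j, (fun x => φ i x * ψ j x) =
      fun x => w (lam (r i)) x * f x ^ (k - 1 - (c j : ℕ)) * g x := by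
    intro i j; ext x; simp only [φ, ψ, p]; ring
  obtain ⟨hI, hE⟩ := andreief μ φ ψ (fun i j => by
    rw [hφψ]; exact hInt (r i) _ (by omega))
  let D : (Fin m → ℝ) → ℝ := fun x => Matrix.det (Matrix.of fun i j => φ i (x j)) *
      Matrix.det (Matrix.of fun i j => ψ j (x i))
  change Integrable D _ at hI
  change ∫ x, D x ∂_ = _ at hE
  have hφdet : ∀ x : Fin m → ℝ, Matrix.det (Matrix.of fun i j => φ i (x j)) =
      (∏ j, g (x j)) * Matrix.det (Matrix.of fun i j => w (lam (r i)) (x j)) := by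
    intro x
    rw [← Matrix.det_mul_row]
    congr 1; ext i j; simp [φ, mul_comm]
  have hwdet : ∀ x : Fin m → ℝ, StrictAnti x →
      0 < Matrix.det (Matrix.of fun i j => w (lam (r i)) (x j)) := fun x hx =>
    hSTP m hm hmk (fun i => lam (r i)) x (fun i j h => hlam_anti _ _ (hr i j h))
      (fun i j h => hx h)
  have hDanti : ∀ x : Fin m → ℝ, StrictAnti x → (∀ i, 0 ≤ x i) → 0 ≤ D x := by
    intro x hx h0
    refine mul_nonneg ?_ ?_
    · rw [hφdet]
      exact mul_nonneg (Finset.prod_nonneg fun j _ => hg_nonneg _) (hwdet x hx).le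
    · exact genVand_nonneg m (fun i => f (x i)) p
        (fun i j h => hf_mono _ _ (h0 _) (hx.antitone h)) (fun i => hf_nonneg _ (h0 i)) hp
  have hDperm : ∀ (x : Fin m → ℝ) (σ : Equiv.Perm (Fin m)), D (x ∘ σ) = D x := by
    intro x σ
    have h1 := Matrix.det_permute' σ (Matrix.of fun i j => φ i (x j))
    have h2 := Matrix.det_permute σ (Matrix.of fun i j => ψ j (x i))
    have h3 : (Matrix.of fun i j => φ i ((x ∘ σ) j)) =
      (Matrix.of fun i j => φ i (x j)).submatrix id σ := by ext; simp
    have h4 : (Matrix.of fun i j => ψ j ((x ∘ σ) i)) =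
      (Matrix.of fun i j => ψ j (x i)).submatrix σ id := by ext; simp
    simp only [D]
    rw [h3, h4, h1, h2]
    rcases Int.units_eq_one_or (Equiv.Perm.sign σ) with h | h <;> simp [h]
  have hDnn : ∀ x : Fin m → ℝ, (∀ i, 0 ≤ x i) → 0 ≤ D x := by
    intro x h0
    by_cases hinj : Function.Injective x
    · let σ := Tuple.sort (fun i => - x i)
      rw [← hDperm x σ]
      have hmo : Monotone ((fun i => - x i) ∘ σ) := Tuple.monotone_sort _
      have ha : Antitone (x ∘ σ) := fun i j h => by simpa using hmo h
      exact hDanti _ (ha.strictAnti_of_injective (hinj.comp σ.injective)) (fun i => h0 _)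
    · simp only [Function.Injective, not_forall] at hinj
      obtain ⟨a, b, hab, hne⟩ := hinj
      refine le_of_eq ?_
      have : Matrix.det (Matrix.of fun i j => ψ j (x i)) = 0 := by
        refine Matrix.det_zero_of_row_eq hne ?_
        ext k; simp [hab]
      simp only [D]; rw [this, mul_zero]
  have hae : 0 ≤ᵐ[Measure.pi fun _ : Fin m => μ] D := by
    have h1 : (Measure.pi fun _ : Fin m => μ) =
        (Measure.pi fun _ : Fin m => (volume : Measure ℝ)).restrict
          (Set.pi Set.univ fun _ => Set.Ici 0) := by
      rw [Measure.restrict_pi_pi]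
    rw [h1]
    filter_upwards [ae_restrict_mem (MeasurableSet.univ_pi fun _ => measurableSet_Ici)] with x hx
    exact hDnn x fun i => hx i (Set.mem_univ i)
  obtain ⟨a, b, ha0, hab, hst⟩ := hf_strict
  have hmR : (0:ℝ) < m := by exact_mod_cast hm
  obtain ⟨δ, hδ⟩ : ∃ δ : ℝ, δ = (b - a) / m := ⟨_, rfl⟩
  have hδ0 : 0 < δ := by rw [hδ]; exact div_pos (by linarith) hmR
  have hmδ : m * δ = b - a := by rw [hδ]; field_simp
  let I : Fin m → Set ℝ := fun l => Set.Ioo (b - ((l:ℕ) + 1) * δ) (b - (l:ℕ) * δ)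
  have hIab : ∀ l, ∀ t ∈ I l, a < t ∧ t < b := by
    rintro l t ⟨h1, h2⟩
    have h3 : ((l:ℕ) + 1 : ℝ) ≤ m := by exact_mod_cast l.2
    have h4 : ((l:ℕ) + 1 : ℝ) * δ ≤ m * δ := by gcongr
    have h5 : (0:ℝ) ≤ (l:ℕ) * δ := by positivity
    constructor <;> linarith
  have hsub : Set.pi Set.univ I ⊆ Function.support D := by
    intro x hx
    have hx' : ∀ i, x i ∈ I i := fun i => hx i (Set.mem_univ i)
    have hxa : StrictAnti x := by
      intro i j hij
      have h1 := (hx' i).1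
      have h2 := (hx' j).2
      have h3 : ((i:ℕ) + 1 : ℝ) ≤ (j:ℕ) := by exact_mod_cast hij
      have h4 : ((i:ℕ) + 1 : ℝ) * δ ≤ (j:ℕ) * δ := by gcongr
      linarith
    refine ne_of_gt (mul_pos ?_ ?_)
    · rw [hφdet]
      exact mul_pos (Finset.prod_pos fun j _ => hg_pos _ (ha0.trans_lt (hIab j _ (hx' j)).1))
        (hwdet x hxa)
    · refine genVand_pos m (fun i => f (x i)) p ?_ ?_ hp
      · intro i j hij
        exact hst _ _ (hIab j _ (hx' j)).1 (hxa hij) (hIab i _ (hx' i)).2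
      · intro i
        have h1 := (hIab i _ (hx' i)).1
        have h2 := (hIab i _ (hx' i)).2
        have := hst ((a + x i) / 2) (x i) (by linarith) (by linarith) h2
        exact (hf_nonneg ((a + x i) / 2) (by linarith)).trans_lt this
  have hpos : 0 < ∫ x, D x ∂(Measure.pi fun _ : Fin m => μ) := by
    rw [integral_pos_iff_support_of_nonneg_ae hae hI]
    refine lt_of_lt_of_le ?_ (measure_mono hsub)
    rw [Measure.pi_pi]
    refine pos_iff_ne_zero.mpr (Finset.prod_ne_zero_iff.mpr fun l _ => ?_)
    have h1 : μ (I l) = volume (I l) := by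
      apply Measure.restrict_eq_self
      intro t ht
      exact ha0.trans (hIab l t ht).1.le
    rw [h1]
    simp only [I, Real.volume_Ioo]
    have : 0 < b - (l:ℕ) * δ - (b - ((l:ℕ) + 1) * δ) := by linarith
    exact (ENNReal.ofReal_pos.mpr this).ne'
  rw [hE] at hpos
  have hdet := pos_of_mul_pos_right hpos (by positivity)
  have hfin : (Matrix.of fun i j : Fin m =>
        (∫ x in Set.Ici (0:ℝ), w (lam (r i)) x * f x ^ (k - 1 - (c j : ℕ)) * g x) /
        (∫ x in Set.Ici (0:ℝ), w (lam (r i)) x * g x)) =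
      Matrix.of fun i j : Fin m => (∫ x in Set.Ici (0:ℝ), w (lam (r i)) x * g x)⁻¹ *
        (Matrix.of fun i j => ∫ x, φ i x * ψ j x ∂μ) i j := by
    ext i j
    simp only [Matrix.of_apply, hφψ]
    rw [div_eq_inv_mul]
  rw [hfin, Matrix.det_mul_column]
  exact mul_pos (Finset.prod_pos fun i _ => inv_pos.mpr (hden_pos _)) hdet
end

section
/- Let w(λ,x) be a nonnegative weight function that is totally positive of order 2, and let f : [0,∞) → [0,∞) be a non-decreasing Borel-measurable function satisfying the uniform Lipschitz condition |f(x₁) − f(x₂)| ≤ |x₁ − x₂| for all x₁, x₂ ≥ 0. Let X be a nonnegative random variable with probability density g such that, for λ ∈ {λ₁, λ₂}, 0 < E[w(λ,X)] < ∞, E[w(λ,X)f(X)] < ∞ and E[w(λ,X)X] < ∞. Then for all λ₁ > λ₂ > 0: H[λ₁,f(X)] − H[λ₂,f(X)] ≤ H[λ₁,X] − H[λ₂,X]. -/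
open MeasureTheory


theorem integral_four_aux (μ : Measure ℝ) (p q r s : ℝ → ℝ) (hp : Integrable p μ)
    (hq : Integrable q μ) (hr : Integrable r μ) (hs : Integrable s μ) :
    ∫ x, (p x - q x - (r x - s x)) ∂μ
      = (∫ x, p x ∂μ) - (∫ x, q x ∂μ) - ((∫ x, r x ∂μ) - (∫ x, s x ∂μ)) := by
  rw [← integral_sub hp hq, ← integral_sub hr hs]
  exact integral_sub (hp.sub hq) (hr.sub hs)

/-- Chebyshev-type inequality, by integrating in one variable and then in the other. -/
theorem chebyshev_aux (μ : Measure ℝ) (a b k : ℝ → ℝ) (ha : Integrable a μ) (hb : Integrable b μ)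
    (hak : Integrable (fun x => a x * k x) μ) (hbk : Integrable (fun x => b x * k x) μ)
    (S : Set ℝ) (hS : ∀ᵐ x ∂μ, x ∈ S)
    (h : ∀ x ∈ S, ∀ y ∈ S, 0 ≤ (a x * b y - a y * b x) * (k x - k y)) :
    (∫ x, b x * k x ∂μ) * (∫ x, a x ∂μ) ≤ (∫ x, a x * k x ∂μ) * (∫ x, b x ∂μ) := by
  have h1 : ∀ y ∈ S, 0 ≤ (∫ x, a x * k x ∂μ) * b y - (∫ x, a x ∂μ) * (b y * k y)
      - ((∫ x, b x * k x ∂μ) * a y - (∫ x, b x ∂μ) * (a y * k y)) := by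
    intro y hy
    have e : 0 ≤ ∫ x, ((a x * k x) * b y - a x * (b y * k y)
        - ((b x * k x) * a y - b x * (a y * k y))) ∂μ := by
      apply integral_nonneg_of_ae
      filter_upwards [hS] with x hx
      have := h x hx y hy
      simp only [Pi.zero_apply]
      linarith
    rw [integral_four_aux μ _ _ _ _ (hak.mul_const _) (ha.mul_const _)
      (hbk.mul_const _) (hb.mul_const _)] at e
    simpa only [integral_mul_const] using e
  have e : 0 ≤ ∫ y, ((∫ x, a x * k x ∂μ) * b y - (∫ x, a x ∂μ) * (b y * k y)
      - ((∫ x, b x * k x ∂μ) * a y - (∫ x, b x ∂μ) * (a y * k y))) ∂μ := by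
    apply integral_nonneg_of_ae
    filter_upwards [hS] with y hy
    exact h1 y hy
  rw [integral_four_aux μ _ _ _ _ (hb.const_mul _) (hbk.const_mul _)
    (ha.const_mul _) (hak.const_mul _)] at e
  simp only [integral_const_mul] at e
  linarith

/-- **Lipschitz bound.** If `w` is TP₂, `f : [0,∞) → [0,∞)` is non-decreasing,
Borel measurable, and 1-Lipschitz, and the relevant expectations are finite with positive
denominators, then for `λ₁ > λ₂ > 0`,
`H[λ₁,f(X)] − H[λ₂,f(X)] ≤ H[λ₁,X] − H[λ₂,X]`. -/
theorem stmt_2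
    (w : ℝ → ℝ → ℝ) (hw_nonneg : ∀ l x : ℝ, 0 ≤ w l x)
    (hTP2 : ∀ l1 l2 x1 x2 : ℝ, l2 < l1 → x2 < x1 →
      0 ≤ w l1 x1 * w l2 x2 - w l1 x2 * w l2 x1)
    (f : ℝ → ℝ) (hf_nonneg : ∀ x : ℝ, 0 ≤ x → 0 ≤ f x)
    (hf_mono : ∀ x y : ℝ, 0 ≤ x → x ≤ y → f x ≤ f y)
    (hf_meas : Measurable f)
    (hf_lip : ∀ x1 x2 : ℝ, 0 ≤ x1 → 0 ≤ x2 → |f x1 - f x2| ≤ |x1 - x2|)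
    (g : ℝ → ℝ) (hg_nonneg : ∀ x : ℝ, 0 ≤ g x) (hg_meas : Measurable g)
    (hg_prob : ∫ x in Set.Ici (0:ℝ), g x = 1)
    (l1 l2 : ℝ) (hl2 : 0 < l2) (hl : l2 < l1)
    (hInt : ∀ l : ℝ, l = l1 ∨ l = l2 →
      IntegrableOn (fun x => w l x * g x) (Set.Ici 0) ∧
      IntegrableOn (fun x => w l x * f x * g x) (Set.Ici 0) ∧
      IntegrableOn (fun x => w l x * x * g x) (Set.Ici 0) ∧
      0 < ∫ x in Set.Ici (0:ℝ), w l x * g x) :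
    (∫ x in Set.Ici (0:ℝ), w l1 x * f x * g x) / (∫ x in Set.Ici (0:ℝ), w l1 x * g x) -
      (∫ x in Set.Ici (0:ℝ), w l2 x * f x * g x) / (∫ x in Set.Ici (0:ℝ), w l2 x * g x) ≤
    (∫ x in Set.Ici (0:ℝ), w l1 x * x * g x) / (∫ x in Set.Ici (0:ℝ), w l1 x * g x) -
      (∫ x in Set.Ici (0:ℝ), w l2 x * x * g x) / (∫ x in Set.Ici (0:ℝ), w l2 x * g x) := by
  obtain ⟨ha, haf, hax, hA⟩ := hInt l1 (Or.inl rfl)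
  obtain ⟨hb, hbf, hbx, hB⟩ := hInt l2 (Or.inr rfl)
  have eq : ∀ l : ℝ, (fun x => w l x * g x * (x - f x))
      = fun x => w l x * x * g x - w l x * f x * g x := by
    intro l; funext x; ring
  have hk : ∀ x y : ℝ, 0 ≤ y → y ≤ x → y - f y ≤ x - f x := by
    intro x y hy hyx
    have h1 := hf_lip x y (hy.trans hyx) hy
    rw [abs_of_nonneg (sub_nonneg.2 hyx)] at h1
    linarith [le_abs_self (f x - f y)]
  have key := chebyshev_aux (volume.restrict (Set.Ici (0:ℝ))) (fun x => w l1 x * g x)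
    (fun x => w l2 x * g x) (fun x => x - f x) ha hb
    (by rw [eq]; exact Integrable.sub hax haf) (by rw [eq]; exact Integrable.sub hbx hbf)
    (Set.Ici 0) (ae_restrict_mem measurableSet_Ici) (by
      intro x hx y hy
      have hx : 0 ≤ x := hx
      have hy : 0 ≤ y := hy
      have e : (w l1 x * g x * (w l2 y * g y) - w l1 y * g y * (w l2 x * g x))
          * (x - f x - (y - f y))
          = (g x * g y) * ((w l1 x * w l2 y - w l1 y * w l2 x) * (x - f x - (y - f y))) := by ring
      show 0 ≤ (w l1 x * g x * (w l2 y * g y) - w l1 y * g y * (w l2 x * g x))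
          * (x - f x - (y - f y))
      rw [e]
      apply mul_nonneg (mul_nonneg (hg_nonneg x) (hg_nonneg y))
      rcases lt_trichotomy x y with h | h | h
      · apply mul_nonneg_of_nonpos_of_nonpos
        · linarith [hTP2 l1 l2 y x hl h]
        · linarith [hk y x hx h.le]
      · subst h; simp
      · apply mul_nonneg (hTP2 l1 l2 x y hl h)
        linarith [hk x y hy h.le])
  simp only [eq] at key
  rw [integral_sub hbx hbf, integral_sub hax haf] at key
  have := (div_le_div_iff₀ hB hA).2 key
  rw [sub_div, sub_div] at this
  linarith
end

section
/- Let w(λ,x) be a nonnegative weight function that is totally positive of order 2, and let f : [0,∞) → [0,∞) be non-decreasing and Borel-measurable. Let X be a nonnegative random variable with probability density g such that, for each λ > 0, 0 < E[w(λ,X)] < ∞ and E[w(λ,X)f(X)] < ∞. Then the function λ ↦ H[λ,f(X)] is non-decreasing on (0,∞): for all λ₁ > λ₂ > 0, H[λ₁,f(X)] ≥ H[λ₂,f(X)]. -/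
open MeasureTheory

/-- **loading monotonicity.** If `w` is TP₂ and `f : [0,∞) → [0,∞)` is
non-decreasing and Borel measurable, with the relevant expectations finite and positive
denominators for each `λ > 0`, then `λ ↦ H[λ, f(X)]` is non-decreasing on `(0,∞)`. -/
theorem stmt_3
    (w : ℝ → ℝ → ℝ) (hw_nonneg : ∀ l x : ℝ, 0 ≤ w l x)
    (hTP2 : ∀ l1 l2 x1 x2 : ℝ, l2 < l1 → x2 < x1 →
      0 ≤ w l1 x1 * w l2 x2 - w l1 x2 * w l2 x1)
    (f : ℝ → ℝ) (hf_nonneg : ∀ x : ℝ, 0 ≤ x → 0 ≤ f x)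
    (hf_mono : ∀ x y : ℝ, 0 ≤ x → x ≤ y → f x ≤ f y)
    (hf_meas : Measurable f)
    (g : ℝ → ℝ) (hg_nonneg : ∀ x : ℝ, 0 ≤ g x) (hg_meas : Measurable g)
    (hg_prob : ∫ x in Set.Ici (0:ℝ), g x = 1)
    (hInt : ∀ l : ℝ, 0 < l →
      IntegrableOn (fun x => w l x * g x) (Set.Ici 0) ∧
      IntegrableOn (fun x => w l x * f x * g x) (Set.Ici 0) ∧
      0 < ∫ x in Set.Ici (0:ℝ), w l x * g x) :
    ∀ l1 l2 : ℝ, 0 < l2 → l2 < l1 →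
      (∫ x in Set.Ici (0:ℝ), w l2 x * f x * g x) / (∫ x in Set.Ici (0:ℝ), w l2 x * g x) ≤
      (∫ x in Set.Ici (0:ℝ), w l1 x * f x * g x) / (∫ x in Set.Ici (0:ℝ), w l1 x * g x) := by
  intro l1 l2 h2 h21
  obtain ⟨ia1, ib1, p1⟩ := hInt l1 (h2.trans h21)
  obtain ⟨ia2, ib2, p2⟩ := hInt l2 h2
  rw [div_le_div_iff₀ p2 p1]
  have key : ∀ x y : ℝ, 0 ≤ x → 0 ≤ y →
      0 ≤ (f x - f y) * ((w l1 x * w l2 y - w l1 y * w l2 x) * (g x * g y)) := by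
    intro x y hx hy
    have hg := mul_nonneg (hg_nonneg x) (hg_nonneg y)
    rcases lt_trichotomy x y with h | h | h
    · have h1 := hTP2 l1 l2 y x h21 h
      have h3 := hf_mono x y hx h.le
      exact mul_nonneg_of_nonpos_of_nonpos (by linarith)
        (mul_nonpos_of_nonpos_of_nonneg (by linarith) hg)
    · subst h; simp
    · have h1 := hTP2 l1 l2 x y h21 h
      have h3 := hf_mono y x hy h.le
      exact mul_nonneg (by linarith) (mul_nonneg (by linarith) hg)
  set A1 := ∫ x in Set.Ici (0:ℝ), w l1 x * g x with hA1
  set A2 := ∫ x in Set.Ici (0:ℝ), w l2 x * g x with hA2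
  set B1 := ∫ x in Set.Ici (0:ℝ), w l1 x * f x * g x with hB1
  set B2 := ∫ x in Set.Ici (0:ℝ), w l2 x * f x * g x with hB2
  -- a linear combination of the four functions integrates to the combination of the integrals
  have lin : ∀ c1 c2 c3 c4 : ℝ,
      ∫ y in Set.Ici (0:ℝ), ((c1 * (w l2 y * g y) + c2 * (w l2 y * f y * g y))
        + (c3 * (w l1 y * f y * g y) + c4 * (w l1 y * g y)))
      = (c1 * A2 + c2 * B2) + (c3 * B1 + c4 * A1) := by
    intro c1 c2 c3 c4
    have j1 := ia2.integrable.const_mul c1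
    have j2 := ib2.integrable.const_mul c2
    have j3 := ib1.integrable.const_mul c3
    have j4 := ia1.integrable.const_mul c4
    refine (integral_add (j1.add j2) (j3.add j4)).trans ?_
    simp only [Pi.add_apply]
    rw [integral_add j1 j2, integral_add j3 j4,
      integral_const_mul, integral_const_mul, integral_const_mul, integral_const_mul]
  have inner : ∀ x : ℝ, 0 ≤ x →
      0 ≤ (B1 * (w l2 x * g x) + (-A1) * (w l2 x * f x * g x))
        + (A2 * (w l1 x * f x * g x) + (-B2) * (w l1 x * g x)) := by
    intro x hx
    have h := lin (w l1 x * f x * g x) (-(w l1 x * g x)) (w l2 x * g x) (-(w l2 x * f x * g x))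
    have hn : 0 ≤ ∫ y in Set.Ici (0:ℝ), ((w l1 x * f x * g x * (w l2 y * g y)
        + -(w l1 x * g x) * (w l2 y * f y * g y))
        + (w l2 x * g x * (w l1 y * f y * g y) + -(w l2 x * f x * g x) * (w l1 y * g y))) := by
      refine setIntegral_nonneg measurableSet_Ici fun y hy => ?_
      have := key x y hx hy
      linarith
    rw [h] at hn
    linarith
  have h := lin B1 (-A1) A2 (-B2)
  have hn := setIntegral_nonneg (μ := volume) (measurableSet_Ici (a := (0:ℝ)))
    fun x hx => inner x hx
  rw [h] at hn
  linarith
end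

section
/- Let w(λ,x) be a nonnegative weight function that is totally positive of order 3, and let f : [0,∞) → [0,∞) be non-decreasing and Borel-measurable. Let X be a nonnegative random variable with probability density g such that, for each λ > 0, 0 < E[w(λ,X)] < ∞, E[w(λ,X)f(X)] < ∞ and E[w(λ,X)(f(X))²] < ∞. Then for all λ₁ > λ₂ > 0: H[λ₁,(f(X))²]·H[λ₂,f(X)] − H[λ₁,f(X)]·H[λ₂,(f(X))²] ≥ 0. -/
open MeasureTheory

/-- If `w` is TP₃ and `f : [0,∞) → [0,∞)` is non-decreasing and Borel
measurable, with the relevant expectations finite and positive denominators for each `λ > 0`,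
then for `λ₁ > λ₂ > 0`,
`H[λ₁,(f(X))²]·H[λ₂,f(X)] − H[λ₁,f(X)]·H[λ₂,(f(X))²] ≥ 0`. -/
theorem stmt_4
    (w : ℝ → ℝ → ℝ) (hw_nonneg : ∀ l x : ℝ, 0 ≤ w l x)
    (hTP3 : ∀ r : ℕ, 1 ≤ r → r ≤ 3 → ∀ l x : Fin r → ℝ,
      (∀ i j : Fin r, i < j → l j < l i) →
      (∀ i j : Fin r, i < j → x j < x i) →
      0 ≤ Matrix.det (Matrix.of fun i j : Fin r => w (l i) (x j)))
    (f : ℝ → ℝ) (hf_nonneg : ∀ x : ℝ, 0 ≤ x → 0 ≤ f x)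
    (hf_mono : ∀ x y : ℝ, 0 ≤ x → x ≤ y → f x ≤ f y)
    (hf_meas : Measurable f)
    (g : ℝ → ℝ) (hg_nonneg : ∀ x : ℝ, 0 ≤ g x) (hg_meas : Measurable g)
    (hg_prob : ∫ x in Set.Ici (0:ℝ), g x = 1)
    (hInt : ∀ l : ℝ, 0 < l →
      IntegrableOn (fun x => w l x * g x) (Set.Ici 0) ∧
      IntegrableOn (fun x => w l x * f x * g x) (Set.Ici 0) ∧
      IntegrableOn (fun x => w l x * f x ^ 2 * g x) (Set.Ici 0) ∧
      0 < ∫ x in Set.Ici (0:ℝ), w l x * g x) :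
    ∀ l1 l2 : ℝ, 0 < l2 → l2 < l1 →
      0 ≤ ((∫ x in Set.Ici (0:ℝ), w l1 x * f x ^ 2 * g x) /
              (∫ x in Set.Ici (0:ℝ), w l1 x * g x)) *
            ((∫ x in Set.Ici (0:ℝ), w l2 x * f x * g x) /
              (∫ x in Set.Ici (0:ℝ), w l2 x * g x)) -
          ((∫ x in Set.Ici (0:ℝ), w l1 x * f x * g x) /
              (∫ x in Set.Ici (0:ℝ), w l1 x * g x)) *
            ((∫ x in Set.Ici (0:ℝ), w l2 x * f x ^ 2 * g x) /
              (∫ x in Set.Ici (0:ℝ), w l2 x * g x)) := by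
  intro l1 l2 h2 h12
  obtain ⟨_, ib1, ia1, p1⟩ := hInt l1 (h2.trans h12)
  obtain ⟨_, ib2, ia2, p2⟩ := hInt l2 h2
  have tp2 : ∀ x y : ℝ, y < x → 0 ≤ w l1 x * w l2 y - w l1 y * w l2 x := by
    intro x y hxy
    have h := hTP3 2 (by norm_num) (by norm_num) ![l1, l2] ![x, y]
      (by intro i j hij; fin_cases i <;> fin_cases j <;> simp_all)
      (by intro i j hij; fin_cases i <;> fin_cases j <;> simp_all)
    simpa [Matrix.det_fin_two] using h
  have key : ∀ x y : ℝ, 0 ≤ x → 0 ≤ y →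
      0 ≤ (w l1 x * w l2 y - w l1 y * w l2 x) * (f x - f y) := by
    intro x y hx hy
    rcases lt_trichotomy x y with h | h | h
    · have h3 := tp2 y x h
      have h4 := hf_mono x y hx h.le
      nlinarith
    · subst h; simp
    · exact mul_nonneg (tp2 x y h) (sub_nonneg.2 (hf_mono y x hy h.le))
  set μ : Measure ℝ := volume.restrict (Set.Ici (0:ℝ)) with hμ
  set a1 : ℝ → ℝ := fun x => w l1 x * f x ^ 2 * g x with ha1
  set b1 : ℝ → ℝ := fun x => w l1 x * f x * g x with hb1
  set a2 : ℝ → ℝ := fun x => w l2 x * f x ^ 2 * g x with ha2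
  set b2 : ℝ → ℝ := fun x => w l2 x * f x * g x with hb2
  have i1 : Integrable (fun p : ℝ × ℝ => a1 p.1 * b2 p.2) (μ.prod μ) :=
    Integrable.mul_prod ia1 ib2
  have i2 : Integrable (fun p : ℝ × ℝ => b1 p.1 * a2 p.2) (μ.prod μ) :=
    Integrable.mul_prod ib1 ia2
  have i3 : Integrable (fun p : ℝ × ℝ => b2 p.1 * a1 p.2) (μ.prod μ) :=
    Integrable.mul_prod ib2 ia1
  have i4 : Integrable (fun p : ℝ × ℝ => a2 p.1 * b1 p.2) (μ.prod μ) :=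
    Integrable.mul_prod ia2 ib1
  have e1 := integral_prod_mul (μ := μ) (ν := μ) a1 b2
  have e2 := integral_prod_mul (μ := μ) (ν := μ) b1 a2
  have e3 := integral_prod_mul (μ := μ) (ν := μ) b2 a1
  have e4 := integral_prod_mul (μ := μ) (ν := μ) a2 b1
  have hae : ∀ᵐ p : ℝ × ℝ ∂(μ.prod μ), p ∈ Set.Ici (0:ℝ) ×ˢ Set.Ici (0:ℝ) := by
    rw [hμ, Measure.prod_restrict]
    exact ae_restrict_mem (measurableSet_Ici.prod measurableSet_Ici)
  have hle : ∫ p : ℝ × ℝ, (b1 p.1 * a2 p.2 + a2 p.1 * b1 p.2) ∂(μ.prod μ) ≤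
      ∫ p : ℝ × ℝ, (a1 p.1 * b2 p.2 + b2 p.1 * a1 p.2) ∂(μ.prod μ) := by
    refine integral_mono_ae (i2.add i4) (i1.add i3) ?_
    filter_upwards [hae] with p hp
    have hx : 0 ≤ p.1 := hp.1
    have hy : 0 ≤ p.2 := hp.2
    have h := mul_nonneg (mul_nonneg (mul_nonneg (hf_nonneg _ hx) (hf_nonneg _ hy))
      (mul_nonneg (hg_nonneg p.1) (hg_nonneg p.2))) (key _ _ hx hy)
    simp only [ha1, ha2, hb1, hb2]
    nlinarith
  rw [integral_add i2 i4, integral_add i1 i3, e1, e2, e3, e4] at hle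
  rw [div_mul_div_comm, div_mul_div_comm, ← sub_div]
  exact div_nonneg (by linarith) (mul_nonneg p1.le p2.le)
end

section
/- Fix u > 0 and define R_c(u,v) = Γ(c+u,v)/Γ(u,v) for c > 0 and v ≥ 0, where Γ(u,v) is the upper incomplete gamma function. Then the function (c,v) ↦ R_c(u,v) is strictly totally positive of order infinity: for every r ≥ 1 and all c₁ > c₂ > ⋯ > c_r > 0 and v₁ > v₂ > ⋯ > v_r ≥ 0, the r×r determinant det( (R_{c_i}(u,v_j))_{i,j=1}^r ) is strictly positive. -/
open MeasureTheory

/-- The upper incomplete gamma function `Γ(u,v) = ∫_v^∞ x^(u-1) e^(-x) dx`. -/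
noncomputable def upperGamma (u v : ℝ) : ℝ :=
  ∫ x in Set.Ioi v, x ^ (u - 1) * Real.exp (-x)

theorem hybrid_aux {n : ℕ} (f : Fin n → ℝ → ℝ) (S : Fin n → Set ℝ)
    (hm : ∀ j, MeasurableSet (S j)) (hv : ∀ j, 0 < volume (S j))
    (hf : ∀ i j, IntegrableOn (f i) (S j))
    (hpos : ∀ x : Fin n → ℝ, (∀ j, x j ∈ S j) → 0 < Matrix.det (Matrix.of fun i j => f i (x j)))
    (T : Finset (Fin n)) :
    ∀ x : Fin n → ℝ, (∀ j, x j ∈ S j) → 0 < Matrix.det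
      (Matrix.of fun i j => if j ∈ T then ∫ t in S j, f i t else f i (x j)) := by
  induction T using Finset.induction_on with
  | empty => simpa using hpos
  | insert k T hk ih =>
    intro x hx
    set M : Matrix (Fin n) (Fin n) ℝ :=
      Matrix.of fun i j => if j ∈ T then ∫ t in S j, f i t else f i (x j) with hM
    have e1 : (Matrix.of fun i j => if j ∈ insert k T then ∫ t in S j, f i t else f i (x j))
        = M.updateCol k (fun i => ∫ t in S k, f i t) := by
      ext i j
      by_cases h : j = k
      · subst h; simp
      · simp [hM, h]
    have e2 : ∀ t ∈ S k, 0 < (M.updateCol k (fun i => f i t)).det := by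
      intro t ht
      have := ih (Function.update x k t) (by
        intro j
        by_cases h : j = k
        · subst h; simpa using ht
        · simpa [h] using hx j)
      convert this using 2
      ext i j
      by_cases h : j = k
      · subst h; simp [hk]
      · simp [hM, h]
    obtain ⟨w, e3⟩ : ∃ w : Fin n → ℝ, ∀ b : Fin n → ℝ,
        (M.updateCol k b).det = ∑ i, b i * w i := by
      refine ⟨fun c => (M.updateCol k fun j => if c = j then 1 else 0).det, fun b => ?_⟩
      have h := congrFun (LinearMap.pi_apply_eq_sum_univ (Matrix.cramer M) b) k
      simpa [Matrix.cramer_apply, Finset.sum_apply] using h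
    have hInt : IntegrableOn (fun t => (M.updateCol k (fun i => f i t)).det) (S k) := by
      simp_rw [e3]
      exact integrable_finsetSum _ fun i _ => (hf i k).mul_const _
    have e4 : (M.updateCol k (fun i => ∫ t in S k, f i t)).det
        = ∫ t in S k, (M.updateCol k (fun i => f i t)).det := by
      simp_rw [e3]
      rw [integral_finsetSum _ fun i _ => (hf i k).mul_const _]
      simp_rw [integral_mul_const]
    rw [e1, e4, setIntegral_pos_iff_support_of_nonneg_ae _ hInt]
    · refine (hv k).trans_le (measure_mono fun t ht => ⟨(e2 t ht).ne', ht⟩)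
    · filter_upwards [ae_restrict_mem (hm k)] with t ht using (e2 t ht).le

theorem det_integral_pos {n : ℕ} (f : Fin n → ℝ → ℝ) (S : Fin n → Set ℝ)
    (hm : ∀ j, MeasurableSet (S j)) (hv : ∀ j, 0 < volume (S j))
    (hf : ∀ i j, IntegrableOn (f i) (S j))
    (hpos : ∀ x : Fin n → ℝ, (∀ j, x j ∈ S j) → 0 < Matrix.det (Matrix.of fun i j => f i (x j))) :
    0 < Matrix.det (Matrix.of fun i j => ∫ t in S j, f i t) := by
  have : ∀ j, (S j).Nonempty := fun j => nonempty_of_measure_ne_zero (hv j).ne'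
  choose x hx using this
  simpa using hybrid_aux f S hm hv hf hpos Finset.univ x hx

theorem vander_pos : ∀ (n : ℕ) (a x : Fin n → ℝ), StrictMono a → StrictMono x → (∀ j, 0 < x j) →
    0 < Matrix.det (Matrix.of fun i j => x j ^ a i) := by
  intro n
  induction n with
  | zero => intros; simp
  | succ n ih =>
    intro a x ha hx hx0
    have key : 0 < Matrix.det (Matrix.of fun i j : Fin n =>
        ∫ t in Set.Ioc (x j.castSucc) (x j.succ), (a i.succ - a 0) * t ^ (a i.succ - a 0 - 1)) := by
      refine det_integral_pos (fun i t => (a i.succ - a 0) * t ^ (a i.succ - a 0 - 1))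
        (fun j => Set.Ioc (x j.castSucc) (x j.succ)) (fun j => measurableSet_Ioc) ?_ ?_ ?_
      · intro j
        simpa using hx (Fin.castSucc_lt_succ (i := j))
      · intro i j
        refine (ContinuousOn.integrableOn_Icc ?_).mono_set Set.Ioc_subset_Icc_self
        intro t ht
        have : t ≠ 0 := ((hx0 _).trans_le ht.1).ne'
        exact (continuousAt_const.mul
          (Real.continuousAt_rpow_const _ _ (Or.inl this))).continuousWithinAt
      · intro t ht
        have h := ih (fun i => a i.succ - a 0 - 1) t
          (fun i j hij => by
            have := ha (Fin.succ_lt_succ_iff.2 hij)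
            simp only; linarith)
          (fun i j hij => by
            have h1 := (ht i).2
            have h2 := (ht j).1
            have : x i.succ ≤ x j.castSucc := hx.monotone (by
              rw [Fin.le_def]; simpa using hij)
            linarith)
          (fun j => (hx0 _).trans (ht j).1)
        have := Matrix.det_mul_column (fun i : Fin n => a i.succ - a 0)
          (Matrix.of fun i j => t j ^ (a i.succ - a 0 - 1))
        simp only [Matrix.of_apply] at this
        rw [this]
        exact mul_pos (Finset.prod_pos fun i _ => sub_pos.2 (ha (Fin.succ_pos i))) h
    have hI : ∀ i j : Fin n, ∫ t in Set.Ioc (x j.castSucc) (x j.succ),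
        (a i.succ - a 0) * t ^ (a i.succ - a 0 - 1)
        = x j.succ ^ (a i.succ - a 0) - x j.castSucc ^ (a i.succ - a 0) := by
      intro i j
      have hlt := hx (Fin.castSucc_lt_succ (i := j))
      have hp := sub_pos.2 (ha (Fin.succ_pos i))
      rw [← intervalIntegral.integral_of_le hlt.le, intervalIntegral.integral_const_mul,
        integral_rpow (Or.inl (by linarith))]
      rw [sub_add_cancel]
      field_simp
    simp_rw [hI] at key
    have h1 : Matrix.det (Matrix.of fun i j => x j ^ (a i - a 0)) = 
        Matrix.det (Matrix.of fun i j : Fin n =>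
          x j.succ ^ (a i.succ - a 0) - x j.castSucc ^ (a i.succ - a 0)) := by
      rw [Matrix.det_eq_of_forall_col_eq_smul_add_pred
        (B := Matrix.of fun (i j : Fin (n+1)) => Fin.cases (x 0 ^ (a i - a 0))
          (fun k : Fin n => x k.succ ^ (a i - a 0) - x k.castSucc ^ (a i - a 0)) j) (fun _ => 1)]
      · rw [Matrix.det_succ_row_zero, Fin.sum_univ_succ]
        simp
        rfl
      · intro i; simp
      · intro i j; simp
    have h2 := Matrix.det_mul_row (fun j => x j ^ a 0) (Matrix.of fun i j => x j ^ (a i - a 0))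
    have h3 : (Matrix.of fun i j => x j ^ a i) = Matrix.of fun i j =>
        x j ^ a 0 * (Matrix.of fun i j => x j ^ (a i - a 0)) i j := by
      ext i j
      simp [← Real.rpow_add (hx0 j)]
    rw [h3, h2, h1]
    exact mul_pos (Finset.prod_pos fun i _ => Real.rpow_pos_of_pos (hx0 i) _) key

theorem vander_pos_anti (n : ℕ) (a x : Fin n → ℝ) (ha : StrictAnti a) (hx : StrictAnti x)
    (h0 : ∀ j, 0 < x j) : 0 < Matrix.det (Matrix.of fun i j => x j ^ a i) := by
  have := vander_pos n (a ∘ Fin.rev) (x ∘ Fin.rev)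
    (fun i j h => ha (Fin.rev_lt_rev.2 h)) (fun i j h => hx (Fin.rev_lt_rev.2 h)) (fun j => h0 _)
  rw [← Matrix.det_submatrix_equiv_self Fin.revPerm]
  exact this

theorem gamma_integrand (s v : ℝ) (hs : 0 < s) (hv : 0 ≤ v) :
    IntegrableOn (fun x : ℝ => x ^ (s - 1) * Real.exp (-x)) (Set.Ioi v) := by
  have := (Real.GammaIntegral_convergent hs).mono_set (Set.Ioi_subset_Ioi hv)
  simpa [mul_comm] using this

theorem upperGamma_pos (s v : ℝ) (hs : 0 < s) (hv : 0 ≤ v) : 0 < upperGamma s v := by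
  unfold upperGamma
  have hp : ∀ t ∈ Set.Ioi v, 0 < t ^ (s - 1) * Real.exp (-t) := fun t ht =>
    mul_pos (Real.rpow_pos_of_pos (hv.trans_lt ht) _) (Real.exp_pos _)
  rw [setIntegral_pos_iff_support_of_nonneg_ae _ (gamma_integrand s v hs hv)]
  · refine lt_of_lt_of_le ?_ (measure_mono fun t ht => ⟨(hp t ht).ne', ht⟩)
    simp
  · filter_upwards [ae_restrict_mem measurableSet_Ioi] with t ht using (hp t ht).le

/-- For fixed `u > 0`, the function `(c,v) ↦ R_c(u,v) = Γ(c+u,v)/Γ(u,v)`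
is strictly totally positive of order infinity for `c > 0` and `v ≥ 0`. -/
theorem stmt_6 (u : ℝ) (hu : 0 < u) :
    ∀ r : ℕ, 1 ≤ r → ∀ c v : Fin r → ℝ,
      (∀ i : Fin r, 0 < c i) → (∀ j : Fin r, 0 ≤ v j) →
      (∀ i j : Fin r, i < j → c j < c i) →
      (∀ i j : Fin r, i < j → v j < v i) →
      0 < Matrix.det (Matrix.of fun i j : Fin r =>
        upperGamma (c i + u) (v j) / upperGamma u (v j)) := by
  intro r hr c v hc hv hca hva
  obtain ⟨n, rfl⟩ : ∃ n, r = n + 1 := ⟨r - 1, by omega⟩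
  have hs : ∀ i, 0 < c i + u := fun i => add_pos (hc i) hu
  obtain ⟨S, hS0, hS1⟩ : ∃ S : Fin (n+1) → Set ℝ, S 0 = Set.Ioi (v 0) ∧
      ∀ k : Fin n, S k.succ = Set.Ioc (v k.succ) (v k.castSucc) :=
    ⟨fun j => Fin.cases (Set.Ioi (v 0)) (fun k : Fin n => Set.Ioc (v k.succ) (v k.castSucc)) j,
      rfl, fun k => rfl⟩
  have hsub : ∀ j, S j ⊆ Set.Ioi (v j) := by
    intro j
    refine Fin.cases ?_ (fun k => ?_) j
    · rw [hS0]
    · rw [hS1]; exact Set.Ioc_subset_Ioi_self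
  have key : 0 < Matrix.det (Matrix.of fun i j =>
      ∫ t in S j, t ^ (c i + u - 1) * Real.exp (-t)) := by
    refine det_integral_pos (fun i t => t ^ (c i + u - 1) * Real.exp (-t)) S ?_ ?_ ?_ ?_
    · intro j
      refine Fin.cases ?_ (fun k => ?_) j
      · rw [hS0]; exact measurableSet_Ioi
      · rw [hS1]; exact measurableSet_Ioc
    · intro j
      refine Fin.cases ?_ (fun k => ?_) j
      · rw [hS0]; simp
      · rw [hS1]; simpa using hva _ _ (Fin.castSucc_lt_succ (i := k))
    · intro i j
      exact (gamma_integrand _ _ (hs i) (hv j)).mono_set (hsub j)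
    · intro t ht
      have ht0 : ∀ j, v j < t j := fun j => hsub j (ht j)
      have h := vander_pos_anti (n+1) (fun i => c i + u - 1) t
        (fun i j hij => by have := hca i j hij; simp only; linarith)
        (fun i j hij => by
          have h1 := ht0 i
          obtain ⟨k, rfl⟩ := Fin.exists_succ_eq.2 (Fin.ne_zero_of_lt hij)
          have h2 : t k.succ ≤ v k.castSucc := by
            have := ht k.succ
            rw [hS1] at this
            exact this.2
          have h3 : v k.castSucc ≤ v i := by
            rcases (Fin.le_castSucc_iff.2 hij).eq_or_lt with h | h
            · rw [h]
            · exact (hva _ _ h).le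
          linarith)
        (fun j => (hv j).trans_lt (ht0 j))
      have := Matrix.det_mul_row (fun j => Real.exp (-t j))
        (Matrix.of fun i j => t j ^ (c i + u - 1))
      simp only [Matrix.of_apply] at this
      simp_rw [mul_comm _ (Real.exp _)]
      rw [this]
      exact mul_pos (Finset.prod_pos fun i _ => Real.exp_pos _) h
  have h1 : Matrix.det (Matrix.of fun i j => upperGamma (c i + u) (v j)) =
      Matrix.det (Matrix.of fun i j => ∫ t in S j, t ^ (c i + u - 1) * Real.exp (-t)) := by
    refine Matrix.det_eq_of_forall_col_eq_smul_add_pred (fun _ => 1) ?_ ?_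
    · intro i
      simp only [Matrix.of_apply, hS0, upperGamma]
    · intro i j
      simp only [Matrix.of_apply, hS1, one_mul, upperGamma]
      have hlt := hva _ _ (Fin.castSucc_lt_succ (i := j))
      have hg := gamma_integrand _ _ (hs i) (hv j.succ)
      rw [← setIntegral_union (Set.Ioc_disjoint_Ioi le_rfl) measurableSet_Ioi
        (hg.mono_set Set.Ioc_subset_Ioi_self) (hg.mono_set (Set.Ioi_subset_Ioi hlt.le)),
        Set.Ioc_union_Ioi_eq_Ioi hlt.le]
  have h2 := Matrix.det_mul_row (fun j => (upperGamma u (v j))⁻¹)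
    (Matrix.of fun i j => upperGamma (c i + u) (v j))
  simp only [Matrix.of_apply] at h2
  simp_rw [div_eq_inv_mul]
  rw [h2, h1]
  exact mul_pos (Finset.prod_pos fun i _ => inv_pos.2 (upperGamma_pos _ _ hu (hv i))) key
end

section
/- Fix c > 0 and define R_c(u,v) = Γ(c+u,v)/Γ(u,v) for u > 0 and v ≥ 0, where Γ(u,v) is the upper incomplete gamma function. Then the function (u,v) ↦ R_c(u,v) is strictly reverse-rule of order 2: for all u₁ > u₂ > 0 and v₁ > v₂ ≥ 0, the 2×2 determinant R_c(u₁,v₁)R_c(u₂,v₂) − R_c(u₁,v₂)R_c(u₂,v₁) is strictly negative. -/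
open MeasureTheory

open Set

lemma aux_pos (F : ℝ → ℝ) (q : ℝ) (hq : 0 ≤ q) (hF : IntegrableOn F (Ioi 0))
    (h0 : ∀ y, 0 < y → 0 ≤ F y) (h1 : ∀ y, q < y → 0 < F y) : 0 < ∫ y in Ioi 0, F y := by
  rw [setIntegral_pos_iff_support_of_nonneg_ae]
  · refine lt_of_lt_of_le ?_ (measure_mono (s := Ioi q) ?_)
    · simp
    · intro y hy
      exact ⟨(h1 y hy).ne', lt_of_le_of_lt hq hy⟩
  · filter_upwards [ae_restrict_mem measurableSet_Ioi] with y hy using h0 y hy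
  · exact hF

lemma aux_int (s v : ℝ) (hv : 0 < v) :
    IntegrableOn (fun y => Real.exp (s * y) * Real.exp (-v * Real.exp y)) (Ioi 0) := by
  have h1 : IntegrableOn (fun y => Real.exp ((s+1)^2/(2*v)) * Real.exp (-y)) (Ioi 0) :=
    (integrableOn_exp_neg_Ioi 0).const_mul _
  refine Integrable.mono' h1 ?_ ?_
  · exact (by fun_prop : Continuous _).aestronglyMeasurable
  · filter_upwards [ae_restrict_mem measurableSet_Ioi] with y hy
    have hy : 0 < y := hy
    rw [Real.norm_of_nonneg (by positivity), ← Real.exp_add, ← Real.exp_add, Real.exp_le_exp]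
    have h2 := Real.quadratic_le_exp_of_nonneg hy.le
    have h3 : v * (y^2/2) ≤ v * Real.exp y := by
      apply mul_le_mul_of_nonneg_left _ hv.le
      linarith
    have h4 : (s+1)*y - v*(y^2/2) ≤ (s+1)^2/(2*v) := by
      rw [le_div_iff₀ (by positivity)]
      nlinarith [sq_nonneg (s+1-v*y)]
    linarith

lemma aux_sc_ineq {k : ℝ → ℝ} (hk : StrictConcaveOn ℝ univ k) {x y z : ℝ} (h1 : x < y)
    (h2 : y < z) : (z - y) * k x + (y - x) * k z < (z - x) * k y := by
  have h := hk.2 (mem_univ x) (mem_univ z) (h1.trans h2).ne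
    (show 0 < (z-y)/(z-x) from div_pos (by linarith) (by linarith))
    (show 0 < (y-x)/(z-x) from div_pos (by linarith) (by linarith))
    (by rw [← add_div, div_eq_one_iff_eq (by linarith)]; ring)
  have hz : z - x ≠ 0 := by linarith
  have e : ((z-y)/(z-x)) • x + ((y-x)/(z-x)) • z = y := by
    simp only [smul_eq_mul]; field_simp; ring
  rw [e] at h
  simp only [smul_eq_mul] at h
  have := mul_lt_mul_of_pos_left h (by linarith : 0 < z - x)
  have e2 : (z-x) * ((z-y)/(z-x) * k x + (y-x)/(z-x) * k z) = (z - y) * k x + (y - x) * k z := by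
    field_simp
  linarith

lemma aux_sign {k : ℝ → ℝ} (hk : StrictConcaveOn ℝ univ k) {p q : ℝ} (hpq : p < q)
    (hp : k p = 0) (hq : k q = 0) :
    (∀ y, y < p → k y < 0) ∧ (∀ y, p < y → y < q → 0 < k y) ∧ (∀ y, q < y → k y < 0) := by
  refine ⟨fun y hy => ?_, fun y h1 h2 => ?_, fun y hy => ?_⟩
  · have := aux_sc_ineq hk hy hpq
    rw [hp, hq] at this
    by_contra h
    push Not at h
    nlinarith [mul_nonneg (sub_pos.2 hpq).le h]
  · have := aux_sc_ineq hk h1 h2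
    rw [hp, hq] at this
    by_contra h
    push Not at h
    nlinarith [mul_nonneg (sub_pos.2 hpq).le (neg_nonneg.2 h)]
  · have := aux_sc_ineq hk hpq hy
    rw [hp, hq] at this
    by_contra h
    push Not at h
    nlinarith [mul_nonneg (sub_pos.2 hpq).le h]

lemma aux_sign1 {k : ℝ → ℝ} (hk : StrictConcaveOn ℝ univ k) {q : ℝ} (h0q : 0 < q)
    (h0 : 0 < k 0) (hq : k q = 0) :
    (∀ y, 0 < y → y < q → 0 < k y) ∧ (∀ y, q < y → k y < 0) := by
  refine ⟨fun y h1 h2 => ?_, fun y hy => ?_⟩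
  · have := aux_sc_ineq hk h1 h2
    rw [hq] at this
    by_contra h
    push Not at h
    nlinarith [mul_nonneg h0q.le (neg_nonneg.2 h), mul_pos (sub_pos.2 h2) h0]
  · have := aux_sc_ineq hk h0q hy
    rw [hq] at this
    by_contra h
    push Not at h
    nlinarith [mul_nonneg h0q.le h, mul_pos (sub_pos.2 hy) h0]

/-- A strict concavity criterion. -/
lemma aux_conc (a b l m c1 c2 : ℝ) (ha : 0 ≤ a) (hb : 0 < b) (hm : m ≠ 0) :
    StrictConcaveOn ℝ univ
      (fun y => c1 + c2 * y - a * Real.exp (l * y) - b * Real.exp (m * y)) := by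
  refine ⟨convex_univ, fun x _ z _ hxz s t hs ht hst => ?_⟩
  have h1 := convexOn_exp.2 (mem_univ (l*x)) (mem_univ (l*z)) hs.le ht.le hst
  have h2 := strictConvexOn_exp.2 (mem_univ (m*x)) (mem_univ (m*z))
    (fun h => hxz (mul_left_cancel₀ hm h)) hs ht hst
  simp only [smul_eq_mul] at *
  rw [show s*(l*x)+t*(l*z) = l*(s*x+t*z) by ring] at h1
  rw [show s*(m*x)+t*(m*z) = m*(s*x+t*z) by ring] at h2
  have h3 := mul_le_mul_of_nonneg_left h1 ha
  have h4 := mul_lt_mul_of_pos_left h2 hb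
  have : c1 = s * c1 + t * c1 := by rw [← add_mul, hst, one_mul]
  nlinarith

noncomputable def auxM (v s : ℝ) : ℝ := ∫ y in Ioi 0, Real.exp (s * y) * Real.exp (-v * Real.exp y)

lemma auxM_pos (v s : ℝ) (hv : 0 < v) : 0 < auxM v s :=
  aux_pos _ 0 le_rfl (aux_int s v hv) (fun y _ => by positivity) (fun y _ => by positivity)

lemma auxM_lt (v s t : ℝ) (hv : 0 < v) (hst : s < t) : auxM v s < auxM v t := by
  have h := aux_pos (fun y => Real.exp (t * y) * Real.exp (-v * Real.exp y) -
    Real.exp (s * y) * Real.exp (-v * Real.exp y)) 0 le_rfl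
    ((aux_int t v hv).sub (aux_int s v hv))
  have h' : ∀ y, 0 < y → 0 < Real.exp (t * y) * Real.exp (-v * Real.exp y) -
    Real.exp (s * y) * Real.exp (-v * Real.exp y) := by
    intro y hy
    rw [← sub_mul]
    apply mul_pos _ (Real.exp_pos _)
    rw [sub_pos, Real.exp_lt_exp]
    exact mul_lt_mul_of_pos_right hst hy
  have := h (fun y hy => (h' y hy).le) h'
  rw [integral_sub (aux_int t v hv) (aux_int s v hv)] at this
  unfold auxM
  linarith

lemma aux_core (v A l s1 s2 s3 : ℝ) (hv : 0 < v) (hA : 0 < A) (h12 : s1 < s2) (h23 : s2 < s3)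
    (h3 : s3 < l) (e1 : auxM v s1 = A / (l - s1)) (e3 : auxM v s3 = A / (l - s3)) (hl : 0 < l) :
    A / (l - s2) < auxM v s2 := by
  set g : ℝ → ℝ := fun y => Real.exp (-v * Real.exp y) - A * Real.exp (-l * y) with hg
  set k : ℝ → ℝ := fun y => -Real.log A + l * y - 0 * Real.exp (0 * y) - v * Real.exp (1 * y) with hkdef
  have hk : StrictConcaveOn ℝ univ k := aux_conc 0 v 0 1 _ l le_rfl hv one_ne_zero
  have hkc : Continuous k := by fun_prop
  have hAe : ∀ y, A * Real.exp (-l * y) = Real.exp (Real.log A + -l * y) := by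
    intro y
    rw [Real.exp_add, Real.exp_log hA]
  have hgpos : ∀ y, 0 < k y → 0 < g y := by
    intro y hy
    simp only [hkdef] at hy
    simp only [hg]
    rw [sub_pos]
    rw [hAe, Real.exp_lt_exp]
    simp only [one_mul] at hy
    linarith
  have hgneg : ∀ y, k y < 0 → g y < 0 := by
    intro y hy
    simp only [hkdef] at hy
    simp only [hg]
    rw [sub_neg]
    rw [hAe, Real.exp_lt_exp]
    simp only [one_mul] at hy
    linarith
  have hg0 : ∀ y, k y ≤ 0 → g y ≤ 0 := by
    intro y hy
    simp only [hkdef] at hy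
    simp only [hg]
    rw [sub_nonpos]
    rw [hAe, Real.exp_le_exp]
    simp only [one_mul] at hy
    linarith
  have hgz : ∀ y, k y = 0 → g y = 0 := by
    intro y hy
    simp only [hkdef] at hy
    simp only [hg]
    rw [sub_eq_zero]
    rw [hAe, Real.exp_eq_exp]
    simp only [one_mul] at hy
    linarith
  have hfun : ∀ s, (fun y => Real.exp (s * y) * g y) = fun y =>
      Real.exp (s * y) * Real.exp (-v * Real.exp y) - A * Real.exp ((s - l) * y) := by
    intro s; funext y
    simp only [hg]
    rw [show (s - l) * y = s * y + -l * y by ring, Real.exp_add]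
    ring
  have hei : ∀ s, s < l → IntegrableOn (fun y => A * Real.exp ((s - l) * y)) (Ioi 0) := by
    intro s hs
    exact (integrableOn_exp_mul_Ioi (by linarith) 0).const_mul _
  have hgi : ∀ s, s < l → IntegrableOn (fun y => Real.exp (s * y) * g y) (Ioi 0) := by
    intro s hs
    rw [hfun]
    exact (aux_int s v hv).sub (hei s hs)
  have hgI : ∀ s, s < l → ∫ y in Ioi 0, Real.exp (s * y) * g y = auxM v s - A / (l - s) := by
    intro s hs
    rw [hfun, integral_sub (aux_int s v hv) (hei s hs), integral_const_mul,
      integral_exp_mul_Ioi (by linarith)]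
    unfold auxM
    simp only [mul_zero, Real.exp_zero]
    congr 1
    rw [← neg_sub l s, neg_div_neg_eq]; ring
  have I1 : ∫ y in Ioi 0, Real.exp (s1 * y) * g y = 0 := by rw [hgI _ (by linarith), e1]; ring
  have I3 : ∫ y in Ioi 0, Real.exp (s3 * y) * g y = 0 := by rw [hgI _ (by linarith), e3]; ring
  have hlarge : ∀ y0 : ℝ, 0 ≤ y0 → ∃ Y, y0 < Y ∧ ∀ y, Y ≤ y → k y < 0 := by
    intro y0 hy0
    have hp : 0 < 2 * (l + 1 + |Real.log A|) / v := by positivity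
    refine ⟨2 * (l + 1 + |Real.log A|) / v + 1 + y0, by linarith, fun Y hY => ?_⟩
    have hY1 : 1 ≤ Y := by linarith
    have h2 := Real.quadratic_le_exp_of_nonneg (by linarith : 0 ≤ Y)
    have h3 : v * (Y^2/2) ≤ v * Real.exp Y := by
      apply mul_le_mul_of_nonneg_left _ hv.le
      linarith
    have h4 : 2 * (l + 1 + |Real.log A|) ≤ v * Y := by
      have : 2 * (l + 1 + |Real.log A|) / v ≤ Y := by linarith
      rw [div_le_iff₀ hv] at this
      linarith
    have h5 := neg_abs_le (Real.log A)
    have h6 := abs_nonneg (Real.log A)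
    simp only [hkdef, one_mul, zero_mul]
    nlinarith [mul_le_mul_of_nonneg_right h4 (by linarith : 0 ≤ Y), mul_nonneg h6 (by linarith : 0 ≤ Y - 1)]
  -- the value at zero is nonpositive
  have hk0 : k 0 ≤ 0 := by
    by_contra hcon
    push Not at hcon
    obtain ⟨Y, hY0, hY⟩ := hlarge 0 le_rfl
    obtain ⟨q, hq, hkq⟩ := intermediate_value_Icc' hY0.le hkc.continuousOn ⟨(hY Y le_rfl).le, hcon.le⟩
    have hq0 : 0 < q := by
      rcases hq.1.lt_or_eq with h | h
      · exact h
      · rw [← h] at hkq; linarith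
    obtain ⟨p1, p2⟩ := aux_sign1 hk hq0 hcon hkq
    set C := Real.exp ((s3 - s1) * q) with hC
    have hfac : ∀ y, C * (Real.exp (s1 * y) * g y) - Real.exp (s3 * y) * g y =
        Real.exp (s1 * y) * ((C - Real.exp ((s3 - s1) * y)) * g y) := by
      intro y
      rw [show s3 * y = s1 * y + (s3 - s1) * y by ring, Real.exp_add]; ring
    have hbig : ∀ y, q < y → 0 < C * (Real.exp (s1 * y) * g y) - Real.exp (s3 * y) * g y := by
      intro y hy
      rw [hfac]
      apply mul_pos (Real.exp_pos _)
      apply mul_pos_of_neg_of_neg _ (hgneg _ (p2 y hy))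
      rw [sub_neg, hC, Real.exp_lt_exp]
      exact mul_lt_mul_of_pos_left hy (by linarith)
    have := aux_pos (fun y => C * (Real.exp (s1 * y) * g y) - Real.exp (s3 * y) * g y) q hq0.le
      (((hgi s1 (by linarith)).const_mul C).sub (hgi s3 (by linarith))) ?_ hbig
    · rw [integral_sub ((hgi s1 (by linarith)).const_mul C) (hgi s3 (by linarith)),
        integral_const_mul, I1, I3] at this
      simp at this
    · intro y hy
      rcases lt_trichotomy y q with h | h | h
      · rw [hfac]
        apply mul_nonneg (Real.exp_pos _).le
        apply mul_nonneg _ (hgpos _ (p1 y hy h)).le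
        rw [sub_nonneg, hC, Real.exp_le_exp]
        exact mul_le_mul_of_nonneg_left h.le (by linarith)
      · rw [h, hgz q hkq]; simp
      · exact (hbig y h).le
  -- somewhere positive
  have hex : ∃ y0, 0 < y0 ∧ 0 < k y0 := by
    by_contra hcon
    push Not at hcon
    obtain ⟨Y, hY0, hY⟩ := hlarge 0 le_rfl
    have := aux_pos (fun y => -(Real.exp (s1 * y) * g y)) Y hY0.le (hgi s1 (by linarith)).neg ?_ ?_
    · rw [integral_neg, I1] at this
      simp at this
    · intro y hy
      have := mul_nonneg (Real.exp_pos (s1 * y)).le (neg_nonneg.2 (hg0 y (hcon y hy)))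
      linarith
    · intro y hy
      have := mul_pos (Real.exp_pos (s1 * y)) (neg_pos.2 (hgneg y (hY y hy.le)))
      linarith
  obtain ⟨y0, hy0, hky0⟩ := hex
  obtain ⟨Y, hY0, hY⟩ := hlarge y0 hy0.le
  obtain ⟨p, hp, hkp⟩ := intermediate_value_Icc hy0.le hkc.continuousOn ⟨hk0, hky0.le⟩
  obtain ⟨q, hq, hkq⟩ := intermediate_value_Icc' hY0.le hkc.continuousOn ⟨(hY Y le_rfl).le, hky0.le⟩
  have hpq : p < q := by
    rcases hp.2.lt_or_eq with h | h
    · exact lt_of_lt_of_le h hq.1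
    · rw [h] at hkp; linarith
  obtain ⟨k1, k2, k3⟩ := aux_sign hk hpq hkp hkq
  set b := s1 - s2 with hb
  set d := s3 - s2 with hd
  set det := Real.exp (b * p + d * q) - Real.exp (b * q + d * p) with hdet
  have hdetpos : 0 < det := by
    rw [hdet, sub_pos, Real.exp_lt_exp]
    nlinarith [mul_pos (sub_pos.2 hpq) (by linarith : 0 < d - b)]
  set α := (Real.exp (d * q) - Real.exp (d * p)) / det with hα
  set β := (Real.exp (b * p) - Real.exp (b * q)) / det with hβ
  have hαp : 0 < α := by
    apply div_pos _ hdetpos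
    rw [sub_pos, Real.exp_lt_exp]
    exact mul_lt_mul_of_pos_left hpq (by linarith)
  have hβp : 0 < β := by
    apply div_pos _ hdetpos
    rw [sub_pos, Real.exp_lt_exp]
    exact mul_lt_mul_of_neg_left hpq (by linarith)
  set ψ : ℝ → ℝ := fun y => 1 + 0 * y - α * Real.exp (b * y) - β * Real.exp (d * y) with hψ
  have hψc : StrictConcaveOn ℝ univ ψ := aux_conc α β b d 1 0 hαp.le hβp (by linarith)
  have hψp : ψ p = 0 := by
    simp only [hψ, hα, hβ]
    field_simp
    rw [hdet, Real.exp_add, Real.exp_add]; ring_nf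
  have hψq : ψ q = 0 := by
    simp only [hψ, hα, hβ]
    field_simp
    rw [hdet, Real.exp_add, Real.exp_add]; ring_nf
  obtain ⟨w1, w2, w3⟩ := aux_sign hψc hpq hψp hψq
  have hfac : ∀ y, Real.exp (s2 * y) * g y - α * (Real.exp (s1 * y) * g y)
      - β * (Real.exp (s3 * y) * g y) = Real.exp (s2 * y) * (ψ y * g y) := by
    intro y
    rw [show s1 * y = s2 * y + b * y by rw [hb]; ring, show s3 * y = s2 * y + d * y by rw [hd]; ring,
      Real.exp_add, Real.exp_add]
    simp only [hψ]
    ring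
  have J2 := hgi s2 (by linarith)
  have J1 := (hgi s1 (by linarith)).const_mul α
  have J3 := (hgi s3 (by linarith)).const_mul β
  have := aux_pos (fun y => Real.exp (s2 * y) * g y - α * (Real.exp (s1 * y) * g y)
      - β * (Real.exp (s3 * y) * g y)) q (by linarith [hq.1]) ((J2.sub J1).sub J3) ?_ ?_
  · have J21 : Integrable (fun y => Real.exp (s2 * y) * g y - α * (Real.exp (s1 * y) * g y))
      (volume.restrict (Ioi 0)) := J2.sub J1
    rw [integral_sub J21 J3, integral_sub J2 J1, integral_const_mul, integral_const_mul,
      I1, I3, hgI s2 (by linarith)] at this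
    linarith
  · intro y hy
    rw [hfac]
    apply mul_nonneg (Real.exp_pos _).le
    rcases lt_trichotomy y p with h | h | h
    · exact (mul_pos_of_neg_of_neg (w1 y h) (hgneg _ (k1 y h))).le
    · rw [h, hψp]; simp
    · rcases lt_trichotomy y q with h' | h' | h'
      · exact (mul_pos (w2 y h h') (hgpos _ (k2 y h h'))).le
      · rw [h', hψq]; simp
      · exact (mul_pos_of_neg_of_neg (w3 y h') (hgneg _ (k3 y h'))).le
  · intro y hy
    rw [hfac]
    exact mul_pos (Real.exp_pos _) (mul_pos_of_neg_of_neg (w3 y hy) (hgneg _ (k3 y hy)))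

lemma aux_convex (v s1 s2 s3 : ℝ) (hv : 0 < v) (h1 : 0 < s1) (h12 : s1 < s2) (h23 : s2 < s3) :
    (s3 - s1) * (1 / auxM v s2) < (s3 - s2) * (1 / auxM v s1) + (s2 - s1) * (1 / auxM v s3) := by
  have p1 := auxM_pos v s1 hv
  have p2 := auxM_pos v s2 hv
  have p3 := auxM_pos v s3 hv
  have h13 := auxM_lt v s1 s3 hv (h12.trans h23)
  set m1 := auxM v s1 with hm1
  set m3 := auxM v s3 with hm3
  have hd : 0 < m3 - m1 := by linarith
  set A := (s3 - s1) * m1 * m3 / (m3 - m1) with hA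
  have hs : 0 < s3 - s1 := by linarith
  have hAp : 0 < A := by positivity
  set l := s1 + A / m1 with hl
  have hl1 : l - s1 = A / m1 := by rw [hl]; ring
  have hl3 : l - s3 = A / m3 := by
    rw [hl, hA]
    field_simp
    ring
  have hl3p : 0 < l - s3 := by rw [hl3]; positivity
  have hc := aux_core v A l s1 s2 s3 hv hAp h12 h23 (by linarith)
    (by rw [hl1, ← hm1]; field_simp) (by rw [hl3, ← hm3]; field_simp) (by linarith)
  have hl2 : 0 < l - s2 := by linarith
  have h4 : 1 / auxM v s2 < (l - s2) / A := by
    rw [div_lt_div_iff₀ p2 hAp]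
    rw [div_lt_iff₀ hl2] at hc
    linarith
  have e1 : 1 / m1 = (l - s1) / A := by rw [hl1]; field_simp
  have e3 : 1 / m3 = (l - s3) / A := by rw [hl3]; field_simp
  rw [e1, e3]
  calc _ < (s3 - s1) * ((l - s2) / A) := mul_lt_mul_of_pos_left h4 hs
    _ = _ := by field_simp; ring

lemma aux_four (v a b d : ℝ) (hv : 0 < v) (ha : 0 < a) (hb : 0 < b) (hd : 0 < d) :
    1 / auxM v (a + b) + 1 / auxM v (a + d) < 1 / auxM v a + 1 / auxM v (a + b + d) := by
  have h1 := aux_convex v a (a + b) (a + b + d) hv ha (by linarith) (by linarith)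
  have h2 := aux_convex v a (a + d) (a + b + d) hv ha (by linarith) (by linarith)
  have h3 : (b + d) * (1 / auxM v (a + b) + 1 / auxM v (a + d)) <
      (b + d) * (1 / auxM v a + 1 / auxM v (a + b + d)) := by
    ring_nf at h1 h2 ⊢
    linarith
  exact lt_of_mul_lt_mul_left h3 (by linarith)

lemma upper_eq (u v : ℝ) (hv : 0 < v) : upperGamma u v = v ^ u * auxM v u := by
  have h := integral_image_eq_integral_abs_deriv_smul (s := Ioi (0:ℝ)) (f := fun y => v * Real.exp y)
    (f' := fun y => v * Real.exp y) measurableSet_Ioi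
    (fun x _ => ((Real.hasDerivAt_exp x).const_mul v).hasDerivWithinAt)
    (fun x _ y _ h => Real.exp_injective (mul_left_cancel₀ hv.ne' h))
    (fun x => x ^ (u - 1) * Real.exp (-x))
  have himg : (fun y => v * Real.exp y) '' Ioi 0 = Ioi v := by
    ext x
    constructor
    · rintro ⟨y, hy, rfl⟩
      have : 1 < Real.exp y := Real.one_lt_exp_iff.2 hy
      show v < v * Real.exp y
      nlinarith
    · intro hx
      have hx : v < x := hx
      refine ⟨Real.log (x / v), Real.log_pos ((one_lt_div hv).2 hx), ?_⟩
      have : 0 < x / v := div_pos (hv.trans hx) hv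
      simp only [Real.exp_log this]
      field_simp
  rw [himg] at h
  unfold upperGamma auxM
  rw [h, ← integral_const_mul]
  congr 1
  funext y
  have he := Real.exp_pos y
  have hve : 0 < v * Real.exp y := by positivity
  rw [abs_of_pos hve, smul_eq_mul, ← mul_assoc, mul_comm (v * Real.exp y), ]
  rw [Real.rpow_sub_one hve.ne', div_mul_cancel₀ _ hve.ne', Real.mul_rpow hv.le he.le,
    ← Real.exp_mul, mul_comm y u, neg_mul]
  ring

lemma upper_int (u v : ℝ) (hu : 0 < u) (hv : 0 ≤ v) :
    IntegrableOn (fun x : ℝ => x ^ (u - 1) * Real.exp (-x)) (Ioi v) := by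
  have := Real.GammaIntegral_convergent hu
  refine (this.congr_fun (fun x _ => mul_comm _ _) measurableSet_Ioi).mono_set (Ioi_subset_Ioi hv)

lemma upper_pos (u v : ℝ) (hu : 0 < u) (hv : 0 ≤ v) : 0 < upperGamma u v := by
  unfold upperGamma
  rw [setIntegral_pos_iff_support_of_nonneg_ae]
  · refine lt_of_lt_of_le ?_ (measure_mono (s := Ioi v) ?_)
    · simp
    · intro y hy
      have : 0 < y := lt_of_le_of_lt hv hy
      exact ⟨by simp only [Function.mem_support]; positivity, hy⟩
  · filter_upwards [ae_restrict_mem measurableSet_Ioi] with y hy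
    have : 0 < y := lt_of_le_of_lt hv hy
    simp only [Pi.zero_apply]
    positivity
  · exact upper_int u v hu hv

lemma upper_sub (u v : ℝ) (hu : 0 < u) (hv : 0 ≤ v) : upperGamma u v =
    upperGamma u 0 - ∫ x in (0:ℝ)..v, x ^ (u - 1) * Real.exp (-x) := by
  have := intervalIntegral.integral_Ioi_sub_Ioi (upper_int u 0 hu le_rfl) hv
  unfold upperGamma
  linarith

lemma upper_ii (u a b : ℝ) (hu : 0 < u) (ha : 0 ≤ a) (hb : 0 ≤ b) :
    IntervalIntegrable (fun x : ℝ => x ^ (u - 1) * Real.exp (-x)) volume a b := by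
  rw [intervalIntegrable_iff]
  refine (upper_int u 0 hu le_rfl).mono_set ?_
  intro x hx
  exact lt_of_le_of_lt (le_min ha hb) hx.1

lemma upper_cont (u : ℝ) (hu : 0 < u) : ContinuousOn (upperGamma u) (Ici 0) := by
  intro x hx
  have hx : 0 ≤ x := hx
  have h : ContinuousOn (fun v => ∫ x in (0:ℝ)..v, x ^ (u - 1) * Real.exp (-x)) (Icc 0 (x+1)) := by
    have := intervalIntegral.continuousOn_primitive_interval'
      (upper_ii u 0 (x+1) hu le_rfl (by linarith)) (left_mem_uIcc)
    rwa [uIcc_of_le (by linarith)] at this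
  have h2 : ContinuousWithinAt (upperGamma u) (Icc 0 (x+1)) x := by
    refine ((continuousWithinAt_const (b := upperGamma u 0)).sub (h x ⟨hx, by linarith⟩)).congr ?_ ?_
    · intro y hy
      exact upper_sub u y hu hy.1
    · exact upper_sub u x hu hx
  refine h2.mono_of_mem_nhdsWithin ?_
  rw [← Ici_inter_Iic]
  exact Filter.inter_mem self_mem_nhdsWithin (mem_nhdsWithin_of_mem_nhds (Iic_mem_nhds (by linarith)))

lemma upper_deriv (u v : ℝ) (hu : 0 < u) (hv : 0 < v) :
    HasDerivAt (upperGamma u) (-(v ^ (u - 1) * Real.exp (-v))) v := by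
  have hc : ContinuousAt (fun x : ℝ => x ^ (u - 1) * Real.exp (-x)) v :=
    (Real.continuousAt_rpow_const v (u - 1) (Or.inl hv.ne')).mul (by fun_prop)
  have h := intervalIntegral.integral_hasDerivAt_right (upper_ii u 0 v hu le_rfl hv.le)
    ⟨Ioi 0, Ioi_mem_nhds hv, (upper_int u 0 hu le_rfl).aestronglyMeasurable⟩ hc
  refine (h.const_sub (upperGamma u 0)).congr_of_eventuallyEq ?_
  filter_upwards [Ioi_mem_nhds hv] with y hy
  exact upper_sub u y hu (le_of_lt hy)

lemma upper_logderiv (u v : ℝ) (hu : 0 < u) (hv : 0 < v) :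
    HasDerivAt (fun v => Real.log (upperGamma u v)) (-(Real.exp (-v) / v * (1 / auxM v u))) v := by
  have h := (upper_deriv u v hu hv).log (upper_pos u v hu hv.le).ne'
  convert h using 1
  have := auxM_pos v u hv
  have h2 : 0 < v ^ u := Real.rpow_pos_of_pos hv _
  rw [upper_eq u v hv, Real.rpow_sub_one hv.ne']
  field_simp

/-- For fixed `c > 0`, the function `(u,v) ↦ R_c(u,v) = Γ(c+u,v)/Γ(u,v)`
is strictly reverse-rule of order 2: for `u₁ > u₂ > 0` and `v₁ > v₂ ≥ 0`,
`R_c(u₁,v₁)R_c(u₂,v₂) − R_c(u₁,v₂)R_c(u₂,v₁) < 0`. -/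
theorem stmt_7 (c : ℝ) (hc : 0 < c) (u1 u2 v1 v2 : ℝ)
    (hu2 : 0 < u2) (hu : u2 < u1) (hv2 : 0 ≤ v2) (hv : v2 < v1) :
    upperGamma (c + u1) v1 / upperGamma u1 v1 *
        (upperGamma (c + u2) v2 / upperGamma u2 v2) -
      upperGamma (c + u1) v2 / upperGamma u1 v2 *
        (upperGamma (c + u2) v1 / upperGamma u2 v1) < 0 := by
  have hu1 : 0 < u1 := hu2.trans hu
  have hv1 : 0 ≤ v1 := hv2.trans hv.le
  have hanti : StrictAntiOn (fun v => Real.log (upperGamma (c + u1) v) - Real.log (upperGamma u1 v)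
      - Real.log (upperGamma (c + u2) v) + Real.log (upperGamma u2 v)) (Ici 0) := by
    have hlc : ∀ u, 0 < u → ContinuousOn (fun v => Real.log (upperGamma u v)) (Ici 0) :=
      fun u hu => (upper_cont u hu).log (fun x hx => (upper_pos u x hu hx).ne')
    apply strictAntiOn_of_deriv_neg (convex_Ici 0)
    · exact (((hlc _ (by linarith)).sub (hlc _ hu1)).sub (hlc _ (by linarith))).add (hlc _ hu2)
    · intro v hv
      rw [interior_Ici] at hv
      have hv : 0 < v := hv
      have hd := ((((upper_logderiv (c + u1) v (by linarith) hv).sub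
        (upper_logderiv u1 v hu1 hv)).sub (upper_logderiv (c + u2) v (by linarith) hv)).add
        (upper_logderiv u2 v hu2 hv)).deriv
      refine lt_of_eq_of_lt hd ?_
      have h4 := aux_four v u2 c (u1 - u2) hv hu2 hc (by linarith)
      rw [show u2 + c = c + u2 by ring, show u2 + (u1 - u2) = u1 by ring,
        show c + u2 + (u1 - u2) = c + u1 by ring] at h4
      have h5 := mul_lt_mul_of_pos_left h4 (by positivity : 0 < Real.exp (-v) / v)
      linarith
  have h := hanti hv2 hv1 hv
  simp only at h
  have a1 := upper_pos (c + u1) v1 (by linarith) hv1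
  have a2 := upper_pos (c + u1) v2 (by linarith) hv2
  have a3 := upper_pos (c + u2) v1 (by linarith) hv1
  have a4 := upper_pos (c + u2) v2 (by linarith) hv2
  have a5 := upper_pos u1 v1 hu1 hv1
  have a6 := upper_pos u1 v2 hu1 hv2
  have a7 := upper_pos u2 v1 hu2 hv1
  have a8 := upper_pos u2 v2 hu2 hv2
  rw [sub_neg, ← Real.log_lt_log_iff (by positivity) (by positivity),
    Real.log_mul (by positivity) (by positivity), Real.log_mul (by positivity) (by positivity),
    Real.log_div a1.ne' a5.ne', Real.log_div a4.ne' a8.ne', Real.log_div a2.ne' a6.ne',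
    Real.log_div a3.ne' a7.ne']
  linarith
end

section
/- Define Q(u,v) = Γ(u,v)/Γ(u) for u > 0 and v ≥ 0, where Γ(u,v) is the upper incomplete gamma function and Γ(u) = Γ(u,0) is the gamma function. Then for every fixed v > 0, the function u ↦ Q(u,v) is strictly increasing on (0,∞): if u₁ > u₂ > 0 then Q(u₁,v) > Q(u₂,v). -/
open MeasureTheory

lemma aux_pos_s8 (f : ℝ → ℝ) (s : Set ℝ) (hs : MeasurableSet s) (hv : 0 < volume s)
    (hf : IntegrableOn f s) (hp : ∀ x ∈ s, 0 < f x) : 0 < ∫ x in s, f x := by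
  rw [setIntegral_pos_iff_support_of_nonneg_ae _ hf]
  · have : Function.support f ∩ s = s := by
      ext x
      simp only [Set.mem_inter_iff, Function.mem_support, and_iff_right_iff_imp]
      exact fun h => (hp x h).ne'
    rwa [this]
  · filter_upwards [ae_restrict_mem hs] with x hx
    exact (hp x hx).le

lemma aux_int_s8 (u : ℝ) (hu : 0 < u) :
    IntegrableOn (fun x : ℝ => x ^ (u - 1) * Real.exp (-x)) (Set.Ioi 0) := by
  simpa [mul_comm] using Real.GammaIntegral_convergent hu

/-- For fixed `v > 0`, the function `u ↦ Q(u,v) = Γ(u,v)/Γ(u)` is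
strictly increasing on `(0,∞)`, where `Γ(u) = Γ(u,0)`. -/
theorem stmt_8 (v : ℝ) (hv : 0 < v) (u1 u2 : ℝ) (hu2 : 0 < u2) (hu : u2 < u1) :
    upperGamma u2 v / upperGamma u2 0 < upperGamma u1 v / upperGamma u1 0 := by
  have i1 := aux_int_s8 u1 (hu2.trans hu)
  have i2 := aux_int_s8 u2 hu2
  have sA : Set.Ioc 0 v ⊆ Set.Ioi (0 : ℝ) := fun x hx => hx.1
  have sB : Set.Ioi v ⊆ Set.Ioi (0 : ℝ) := fun x hx => hv.trans hx
  have split : ∀ u : ℝ, 0 < u → upperGamma u 0 =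
      (∫ x in Set.Ioc 0 v, x ^ (u - 1) * Real.exp (-x)) + upperGamma u v := by
    intro u h
    unfold upperGamma
    rw [← setIntegral_union (Set.Ioc_disjoint_Ioi le_rfl) measurableSet_Ioi
      ((aux_int_s8 u h).mono_set sA) ((aux_int_s8 u h).mono_set sB), Set.Ioc_union_Ioi_eq_Ioi hv.le]
  have posA : ∀ u : ℝ, 0 < u → 0 < ∫ x in Set.Ioc 0 v, x ^ (u - 1) * Real.exp (-x) := by
    intro u h
    refine aux_pos_s8 _ _ measurableSet_Ioc (by simpa using hv) ((aux_int_s8 u h).mono_set sA) ?_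
    intro x hx
    have := hx.1
    positivity
  have posB : ∀ u : ℝ, 0 < u → 0 < upperGamma u v := by
    intro u h
    refine aux_pos_s8 _ _ measurableSet_Ioi (by simp) ((aux_int_s8 u h).mono_set sB) ?_
    intro x hx
    have : 0 < x := sB hx
    positivity
  have key : ∀ x : ℝ, 0 < x → x ^ (u1 - 1) = x ^ (u1 - u2) * x ^ (u2 - 1) := by
    intro x hx
    rw [← Real.rpow_add hx]
    ring_nf
  have hB : v ^ (u1 - u2) * upperGamma u2 v < upperGamma u1 v := by
    have h := aux_pos_s8 (fun x => x ^ (u1 - 1) * Real.exp (-x) -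
        v ^ (u1 - u2) * (x ^ (u2 - 1) * Real.exp (-x))) (Set.Ioi v) measurableSet_Ioi (by simp)
      ((i1.mono_set sB).sub ((i2.mono_set sB).const_mul _)) (by
        intro x hx
        have h0 : 0 < x := sB hx
        have h1 : v ^ (u1 - u2) < x ^ (u1 - u2) :=
          Real.rpow_lt_rpow hv.le hx (by linarith)
        rw [key x h0, mul_assoc, ← sub_mul]
        exact mul_pos (by linarith) (by positivity))
    rw [integral_sub (i1.mono_set sB) ((i2.mono_set sB).const_mul _),
      integral_const_mul] at h
    unfold upperGamma
    linarith
  have hA : (∫ x in Set.Ioc 0 v, x ^ (u1 - 1) * Real.exp (-x)) ≤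
      v ^ (u1 - u2) * ∫ x in Set.Ioc 0 v, x ^ (u2 - 1) * Real.exp (-x) := by
    rw [← integral_const_mul]
    refine setIntegral_mono_on (i1.mono_set sA) ((i2.mono_set sA).const_mul _)
      measurableSet_Ioc ?_
    intro x hx
    have h0 : 0 < x := hx.1
    have h1 : x ^ (u1 - u2) ≤ v ^ (u1 - u2) :=
      Real.rpow_le_rpow h0.le hx.2 (by linarith)
    rw [key x h0, mul_assoc]
    exact mul_le_mul_of_nonneg_right h1 (by positivity)
  have a1 := posA u1 (hu2.trans hu)
  have a2 := posA u2 hu2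
  have b1 := posB u1 (hu2.trans hu)
  have b2 := posB u2 hu2
  rw [split u1 (hu2.trans hu), split u2 hu2, div_lt_div_iff₀ (by linarith) (by linarith)]
  have e1 := mul_le_mul_of_nonneg_left hA b2.le
  have e2 := mul_lt_mul_of_pos_right hB a2
  nlinarith
end

section
/- Define Q(u,v) = Γ(u,v)/Γ(u) for u > 0 and v ≥ 0, and for fixed u > 0 and v ∈ (0,1) let Q^{−1}(u,v) denote the unique q > 0 with Q(u,q) = v. Fix u > 0. Then the function (c,v) ↦ C_c(u,v) := Γ(c+u, Q^{−1}(u,v))/Γ(c+u) is strictly reverse-rule of order infinity in (c,v): for every r ≥ 1, all c₁ > c₂ > ⋯ > c_r > 0 and all 1 > v₁ > v₂ > ⋯ > v_r > 0, the quantity (−1)^{r(r−1)/2} · det( (C_{c_i}(u,v_j))_{i,j=1}^r ) is strictly positive. -/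
open MeasureTheory

theorem ug_integrable {s : ℝ} (hs : 0 < s) :
    IntegrableOn (fun x : ℝ => x ^ (s - 1) * Real.exp (-x)) (Set.Ioi 0) := by
  have h := Real.GammaIntegral_convergent hs
  simpa only [mul_comm] using h

theorem ug_zero {s : ℝ} (hs : 0 < s) : upperGamma s 0 = Real.Gamma s := by
  rw [Real.Gamma_eq_integral hs, upperGamma]
  simp only [mul_comm]

theorem ug_eq {s : ℝ} (hs : 0 < s) {t : ℝ} (ht : 0 ≤ t) :
    upperGamma s t = upperGamma s 0 - ∫ x in (0:ℝ)..t, x ^ (s - 1) * Real.exp (-x) := by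
  have h := intervalIntegral.integral_interval_add_Ioi (a := 0) (b := t) (ug_integrable hs)
    ((ug_integrable hs).mono_set (Set.Ioi_subset_Ioi ht))
  unfold upperGamma
  linarith

theorem ug_tendsto {s : ℝ} (hs : 0 < s) :
    Filter.Tendsto (upperGamma s) Filter.atTop (nhds 0) := by
  have h := intervalIntegral_tendsto_integral_Ioi (0:ℝ) (ug_integrable hs) Filter.tendsto_id
  have h2 := h.const_sub (upperGamma s 0)
  have h3 : upperGamma s 0 - ∫ x in Set.Ioi (0:ℝ), x ^ (s - 1) * Real.exp (-x) = 0 := by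
    simp [upperGamma]
  rw [h3] at h2
  refine h2.congr' ?_
  filter_upwards [Filter.eventually_ge_atTop 0] with t ht
  exact (ug_eq hs ht).symm

theorem ug_deriv {s : ℝ} (hs : 0 < s) {t : ℝ} (ht : 0 < t) :
    HasDerivAt (upperGamma s) (-(t ^ (s - 1) * Real.exp (-t))) t := by
  have hc : ∀ x : ℝ, 0 < x → ContinuousAt (fun x : ℝ => x ^ (s - 1) * Real.exp (-x)) x := by
    intro x hx
    refine (Real.continuousAt_rpow_const x (s-1) (Or.inl hx.ne')).mul ?_
    fun_prop
  have hI : IntervalIntegrable (fun x : ℝ => x ^ (s - 1) * Real.exp (-x)) volume 0 t := by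
    rw [intervalIntegrable_iff_integrableOn_Ioc_of_le ht.le]
    exact (ug_integrable hs).mono_set Set.Ioc_subset_Ioi_self
  have hm : StronglyMeasurableAtFilter (fun x : ℝ => x ^ (s - 1) * Real.exp (-x)) (nhds t) := by
    refine ContinuousAt.stronglyMeasurableAtFilter (s := Set.Ioi 0) isOpen_Ioi hc t ht
  have h := (intervalIntegral.integral_hasDerivAt_right hI hm (hc t ht)).const_sub
    (upperGamma s 0)
  refine h.congr_of_eventuallyEq ?_
  filter_upwards [eventually_gt_nhds ht] with y hy
  exact ug_eq hs hy.le

theorem ug_anti {s : ℝ} (hs : 0 < s) {x y : ℝ} (hx : 0 < x) (hxy : x ≤ y) :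
    upperGamma s y ≤ upperGamma s x := by
  refine setIntegral_mono_set ((ug_integrable hs).mono_set (Set.Ioi_subset_Ioi hx.le)) ?_ ?_
  · filter_upwards [ae_restrict_mem measurableSet_Ioi] with z hz
    have : 0 < z := hx.trans hz
    simp only [Pi.zero_apply]
    positivity
  · exact (Set.Ioi_subset_Ioi hxy).eventuallyLE

/-- Generalized Vandermonde: an exponential sum with `n` terms has fewer than `n` zeros. -/
theorem powers_indep : ∀ (n : ℕ) (p b x : Fin n → ℝ), Function.Injective p → StrictMono x →
    (∀ j, 0 < x j) → (∀ j, ∑ i, b i * x j ^ p i = 0) → ∀ i, b i = 0 := by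
  intro n
  induction n with
  | zero => intro p b x _ _ _ _ i; exact i.elim0
  | succ n ih =>
    intro p b x hp hx hpos hz
    have hg : ∀ t : ℝ, 0 < t → HasDerivAt (fun t : ℝ => ∑ i, b i * t ^ (p i - p 0))
        (∑ i, b i * ((p i - p 0) * t ^ (p i - p 0 - 1))) t := by
      intro t ht
      refine HasDerivAt.fun_sum fun i _ => ?_
      exact (Real.hasDerivAt_rpow_const (Or.inl ht.ne')).const_mul _
    have hgz : ∀ j, (fun t : ℝ => ∑ i, b i * t ^ (p i - p 0)) (x j) = 0 := by
      intro j
      have : ∑ i, b i * x j ^ (p i - p 0) = (∑ i, b i * x j ^ p i) / x j ^ p 0 := by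
        rw [Finset.sum_div]
        refine Finset.sum_congr rfl fun i _ => ?_
        rw [Real.rpow_sub (hpos j), mul_div_assoc]
      simp only [this, hz j, zero_div]
    have hy : ∀ j : Fin n, ∃ y ∈ Set.Ioo (x j.castSucc) (x j.succ),
        (∑ i, b i * ((p i - p 0) * y ^ (p i - p 0 - 1))) = 0 := by
      intro j
      refine exists_hasDerivAt_eq_zero (f := fun t : ℝ => ∑ i, b i * t ^ (p i - p 0))
        (hx Fin.castSucc_lt_succ) ?_ ?_ ?_
      · intro t ht
        exact (hg t ((hpos _).trans_le ht.1)).continuousAt.continuousWithinAt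
      · exact (hgz _).trans (hgz _).symm
      · intro t ht
        exact hg t ((hpos _).trans ht.1)
    choose y hy1 hy2 using hy
    have hmono : StrictMono y := by
      intro j k hjk
      refine (hy1 j).2.trans_le (le_trans ?_ (hy1 k).1.le)
      exact hx.monotone (Fin.succ_le_castSucc_iff.2 hjk)
    have h0 := ih (fun i => p i.succ - p 0 - 1) (fun i => b i.succ * (p i.succ - p 0)) y
      (by
        intro i k h
        have : p i.succ = p k.succ := by simpa using h
        exact Fin.succ_injective _ (hp this))
      hmono (fun j => (hpos _).trans (hy1 j).1)
      (by
        intro j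
        have := hy2 j
        rw [Fin.sum_univ_succ] at this
        simpa [mul_assoc] using this)
    have hs : ∀ i : Fin n, b i.succ = 0 := by
      intro i
      rcases mul_eq_zero.1 (h0 i) with h | h
      · exact h
      · exact absurd (hp (sub_eq_zero.1 h)) (Fin.succ_ne_zero i)
    intro i
    refine Fin.cases ?_ hs i
    have := hz 0
    rw [Fin.sum_univ_succ] at this
    simp only [hs, zero_mul, Finset.sum_const_zero, add_zero] at this
    rcases mul_eq_zero.1 this with h | h
    · exact h
    · exact absurd h (Real.rpow_pos_of_pos (hpos 0) _).ne'

theorem F_deriv {n : ℕ} (a b : Fin n → ℝ) (ha : ∀ i, 0 < a i) {t : ℝ} (ht : 0 < t) :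
    HasDerivAt (fun t : ℝ => ∑ i, b i * upperGamma (a i) t)
      (-(Real.exp (-t) * ∑ i, b i * t ^ (a i - 1))) t := by
  have : -(Real.exp (-t) * ∑ i, b i * t ^ (a i - 1)) =
      ∑ i, b i * (-(t ^ (a i - 1) * Real.exp (-t))) := by
    rw [Finset.mul_sum, ← Finset.sum_neg_distrib]
    exact Finset.sum_congr rfl fun i _ => by ring
  rw [this]
  refine HasDerivAt.fun_sum fun i _ => ?_
  exact (ug_deriv (ha i) ht).const_mul _

theorem F_tendsto {n : ℕ} (a b : Fin n → ℝ) (ha : ∀ i, 0 < a i) :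
    Filter.Tendsto (fun t : ℝ => ∑ i, b i * upperGamma (a i) t) Filter.atTop (nhds 0) := by
  have h := tendsto_finsetSum (Finset.univ : Finset (Fin n))
    (fun i _ => (ug_tendsto (ha i)).const_mul (b i))
  simpa using h

theorem F_zeros (n : ℕ) (a b q : Fin n → ℝ) (ha : ∀ i, 0 < a i) (hinj : Function.Injective a)
    (hq : StrictMono q) (hpos : ∀ j, 0 < q j)
    (hz : ∀ j, ∑ i, b i * upperGamma (a i) (q j) = 0) : ∀ i, b i = 0 := by
  cases n with
  | zero => intro i; exact i.elim0
  | succ n =>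
  have key : ∀ t : ℝ, Real.exp (-t) ≠ 0 := fun t => (Real.exp_pos _).ne'
  have h1 : ∀ j : Fin n, ∃ y ∈ Set.Ioo (q j.castSucc) (q j.succ),
      ∑ i, b i * y ^ (a i - 1) = 0 := by
    intro j
    obtain ⟨y, hy, h⟩ := exists_hasDerivAt_eq_zero
      (f := fun t : ℝ => ∑ i, b i * upperGamma (a i) t)
      (f' := fun t => -(Real.exp (-t) * ∑ i, b i * t ^ (a i - 1)))
      (hq (Fin.castSucc_lt_succ (i := j)))
      (fun t ht => (F_deriv a b ha ((hpos _).trans_le ht.1)).continuousAt.continuousWithinAt)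
      (by simp only [hz])
      (fun t ht => F_deriv a b ha ((hpos _).trans ht.1))
    refine ⟨y, hy, ?_⟩
    simpa [key] using h
  have h2 : ∃ y, q (Fin.last n) < y ∧ ∑ i, b i * y ^ (a i - 1) = 0 := by
    have hl := hpos (Fin.last n)
    obtain ⟨t, ht, h⟩ := exists_hasDerivAt_eq_zero'
      (f := fun t : ℝ => ∑ i, b i * upperGamma (a i) t⁻¹)
      (f' := fun t => -(Real.exp (-t⁻¹) * ∑ i, b i * t⁻¹ ^ (a i - 1)) * (-(t ^ 2)⁻¹))
      (a := 0) (b := (q (Fin.last n))⁻¹) (l := 0) (inv_pos.2 hl)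
      ((F_tendsto a b ha).comp tendsto_inv_nhdsGT_zero)
      (by
        have hc : ContinuousAt (fun t : ℝ => ∑ i, b i * upperGamma (a i) t⁻¹)
            (q (Fin.last n))⁻¹ := by
          have h1 := (F_deriv a b ha hl).continuousAt
          have h2 : ContinuousAt (fun t : ℝ => t⁻¹) (q (Fin.last n))⁻¹ :=
            continuousAt_inv₀ (inv_pos.2 hl).ne'
          exact ContinuousAt.comp (g := fun t : ℝ => ∑ i, b i * upperGamma (a i) t)
            (by simpa using h1) h2
        have := hc.tendsto.mono_left (nhdsWithin_le_nhds (s := Set.Iio (q (Fin.last n))⁻¹))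
        simpa [hz] using this)
      (fun t ht => by
        exact HasDerivAt.comp (h₂ := fun t : ℝ => ∑ i, b i * upperGamma (a i) t) t
          (F_deriv a b ha (inv_pos.2 ht.1)) (hasDerivAt_inv ht.1.ne'))
    refine ⟨t⁻¹, ?_, ?_⟩
    · rw [lt_inv_comm₀ hl ht.1]; exact ht.2
    · have h3 : t ≠ 0 := ht.1.ne'
      simp only [mul_eq_zero, neg_eq_zero, key, false_or, inv_eq_zero, pow_eq_zero_iff,
        ne_eq, OfNat.ofNat_ne_zero, not_false_eq_true, h3, or_false] at h
      exact h
  choose y hy1 hy2 using h1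
  obtain ⟨z, hz1, hz2⟩ := h2
  have hy3 : ∀ j : Fin (n+1), ∃ w, q j < w ∧ (∀ k, j < k → w < q k) ∧
      ∑ i, b i * w ^ (a i - 1) = 0 := by
    intro j
    refine Fin.lastCases ?_ (fun j => ?_) j
    · exact ⟨z, hz1, fun k hk => absurd hk (not_lt.2 (Fin.le_last k)), hz2⟩
    · refine ⟨y j, (hy1 j).1, fun k hk => (hy1 j).2.trans_le (hq.monotone ?_), hy2 j⟩
      exact Fin.castSucc_lt_iff_succ_le.1 hk
  choose w hw1 hw2 hw3 using hy3
  exact powers_indep (n+1) (fun i => a i - 1) b w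
    (fun i k h => hinj (by simpa using h))
    (fun j k hjk => (hw2 j k hjk).trans (hw1 k)) (fun j => (hpos j).trans (hw1 j)) hw3

theorem det_ne {n : ℕ} (a q : Fin n → ℝ) (ha : ∀ i, 0 < a i) (hinj : Function.Injective a)
    (hq : StrictMono q) (hpos : ∀ j, 0 < q j) :
    Matrix.det (Matrix.of fun i j : Fin n => upperGamma (a i) (q j)) ≠ 0 := by
  intro h
  obtain ⟨b, hb, h⟩ := Matrix.exists_vecMul_eq_zero_iff.2 h
  apply hb
  funext i
  refine F_zeros n a b q ha hinj hq hpos (fun j => ?_) i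
  have := congrFun h j
  simpa [Matrix.vecMul, dotProduct] using this

theorem F_pos {n : ℕ} (a b : Fin (n+1) → ℝ) (ha : ∀ i, 0 < a i) (hanti : StrictAnti a)
    (hb : 0 < b 0) (t0 : ℝ) :
    ∃ T, t0 < T ∧ 0 < ∑ i, b i * upperGamma (a i) T := by
  have h1 : Filter.Tendsto (fun x : ℝ => ∑ i, b i * x ^ (a i - a 0)) Filter.atTop
      (nhds (b 0)) := by
    have h : ∀ i : Fin n, Filter.Tendsto (fun x : ℝ => b i.succ * x ^ (a i.succ - a 0))
        Filter.atTop (nhds 0) := by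
      intro i
      have := (tendsto_rpow_neg_atTop (y := a 0 - a i.succ)
        (sub_pos.2 (hanti (Fin.succ_pos i)))).const_mul (b i.succ)
      simpa using this
    have h := tendsto_finsetSum (Finset.univ : Finset (Fin n)) (fun i _ => h i)
    have h := h.const_add (b 0)
    simp only [Fin.sum_univ_succ]
    simpa using h
  have h2 := (h1.eventually_const_lt hb).and (Filter.eventually_gt_atTop (max t0 0))
  obtain ⟨T, hT⟩ := Filter.eventually_atTop.1 h2
  have hT0 : max t0 0 < T := (hT T le_rfl).2
  have hTpos : ∀ x, T ≤ x → 0 < x := fun x hx =>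
    (le_max_right t0 0).trans_lt (hT0.trans_le hx)
  have hA : StrictAntiOn (fun t : ℝ => ∑ i, b i * upperGamma (a i) t) (Set.Ici T) := by
    refine strictAntiOn_of_deriv_neg (convex_Ici T) ?_ ?_
    · intro x hx
      exact (F_deriv a b ha (hTpos x hx)).continuousAt.continuousWithinAt
    · intro x hx
      rw [interior_Ici] at hx
      have hx0 := hTpos x (le_of_lt hx)
      rw [(F_deriv a b ha hx0).deriv]
      have h3 := (hT x (le_of_lt hx)).1
      have h4 : ∑ i, b i * x ^ (a i - 1) = x ^ (a 0 - 1) * ∑ i, b i * x ^ (a i - a 0) := by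
        rw [Finset.mul_sum]
        refine Finset.sum_congr rfl fun i _ => ?_
        rw [mul_left_comm, ← Real.rpow_add hx0]
        congr 2
        ring
      rw [h4]
      have := Real.exp_pos (-x)
      have := Real.rpow_pos_of_pos hx0 (a 0 - 1)
      have : 0 < Real.exp (-x) * (x ^ (a 0 - 1) * ∑ i, b i * x ^ (a i - a 0)) := by positivity
      linarith
  refine ⟨T, (le_max_left _ _).trans_lt hT0, ?_⟩
  have h5 : 0 ≤ (fun t : ℝ => ∑ i, b i * upperGamma (a i) t) (T+1) := by
    refine le_of_tendsto (F_tendsto a b ha) ?_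
    filter_upwards [Filter.eventually_ge_atTop (T+1)] with x hx
    exact hA.antitoneOn (by simp) (by simp; linarith) hx
  exact h5.trans_lt (hA (by simp) (by simp) (by linarith))

theorem det_sign : ∀ (n : ℕ) (a q : Fin n → ℝ), (∀ i, 0 < a i) → StrictAnti a →
    StrictMono q → (∀ j, 0 < q j) →
    0 < (-1 : ℝ) ^ (n * (n - 1) / 2) *
      Matrix.det (Matrix.of fun i j : Fin n => upperGamma (a i) (q j)) := by
  intro n
  induction n with
  | zero => intro a q _ _ _ _; simp
  | succ n ih =>
    intro a q ha hanti hq hpos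
    set σ : ℝ := (-1 : ℝ) ^ ((n + 1) * (n + 1 - 1) / 2) with hσ
    have hσ' : σ = (-1) ^ n * (-1 : ℝ) ^ (n * (n - 1) / 2) := by
      rw [hσ, ← pow_add]
      congr 1
      have : (n + 1) * (n + 1 - 1) = n * (n - 1) + n * 2 := by
        cases n with
        | zero => rfl
        | succ m => simp; ring
      rw [this, Nat.add_mul_div_right _ _ (by norm_num)]
      ring
    set b : Fin (n+1) → ℝ := fun i => σ * ((-1) ^ ((i : ℕ) + n) *
      Matrix.det (Matrix.of fun i' j' : Fin n =>
        upperGamma (a (i.succAbove i')) (q j'.castSucc))) with hbdef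
    have hb0 : 0 < b 0 := by
      have := ih (fun i => a i.succ) (fun j => q j.castSucc) (fun i => ha _)
        (fun i k h => hanti (Fin.succ_lt_succ_iff.2 h))
        (fun i k h => hq (Fin.castSucc_lt_castSucc_iff.2 h)) (fun j => hpos _)
      simp only [hbdef, hσ', Fin.val_zero, zero_add, Fin.zero_succAbove]
      have h1 : ((-1:ℝ) ^ n) * (-1) ^ n = 1 := by
        rw [← mul_pow]; simp
      calc _ < _ := this
        _ = (((-1:ℝ) ^ n) * (-1) ^ n) * _ := by rw [h1, one_mul]
        _ = _ := by ring
    have hF : ∀ t, σ * Matrix.det (Matrix.of fun i j : Fin (n+1) => upperGamma (a i)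
        ((Fin.snoc (fun j : Fin n => q j.castSucc) t : Fin (n+1) → ℝ) j)) =
        ∑ i, b i * upperGamma (a i) t := by
      intro t
      rw [Matrix.det_succ_column _ (Fin.last n), Finset.mul_sum]
      refine Finset.sum_congr rfl fun i _ => ?_
      have : (Matrix.of fun i j : Fin (n+1) => upperGamma (a i)
        ((Fin.snoc (fun j : Fin n => q j.castSucc) t : Fin (n+1) → ℝ) j)).submatrix
          i.succAbove (Fin.last n).succAbove = Matrix.of fun i' j' : Fin n =>
        upperGamma (a (i.succAbove i')) (q j'.castSucc) := by
        ext i' j'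
        simp
      rw [this]
      simp only [hbdef, Matrix.of_apply, Fin.snoc_last, Fin.val_last]
      ring
    have hql : (Fin.snoc (fun j : Fin n => q j.castSucc) (q (Fin.last n)) : Fin (n+1) → ℝ) = q :=
      Fin.snoc_init_self q
    have hmain := hF (q (Fin.last n))
    rw [hql] at hmain
    rw [hmain]
    have hσ0 : σ ≠ 0 := by rw [hσ]; exact pow_ne_zero _ (by norm_num)
    have hne : ∀ t, q (Fin.last n) ≤ t → ∑ i, b i * upperGamma (a i) t ≠ 0 := by
      intro t ht
      rw [← hF t]
      refine mul_ne_zero hσ0 (det_ne a _ ha hanti.injective ?_ ?_)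
      · intro j k
        refine Fin.lastCases ?_ (fun k => ?_) k
        · refine Fin.lastCases ?_ (fun j => ?_) j
          · intro h; exact absurd h (lt_irrefl _)
          · intro h
            simp only [Fin.snoc_castSucc, Fin.snoc_last]
            exact (hq h).trans_le ht
        · refine Fin.lastCases ?_ (fun j => ?_) j
          · intro h; exact absurd h (not_lt.2 (Fin.le_last _))
          · intro h
            simp only [Fin.snoc_castSucc]
            exact hq h
      · intro j
        refine Fin.lastCases ?_ (fun j => ?_) j
        · simp only [Fin.snoc_last]; exact (hpos _).trans_le ht
        · simp only [Fin.snoc_castSucc]; exact hpos _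
    by_contra hcon
    obtain ⟨T, hT1, hT2⟩ := F_pos a b ha hanti hb0 (q (Fin.last n))
    have hcont : ContinuousOn (fun t : ℝ => ∑ i, b i * upperGamma (a i) t)
        (Set.Icc (q (Fin.last n)) T) := fun t ht =>
      (F_deriv a b ha ((hpos _).trans_le ht.1)).continuousAt.continuousWithinAt
    obtain ⟨t, ht, h⟩ := intermediate_value_Icc hT1.le hcont ⟨not_lt.1 hcon, hT2.le⟩
    exact hne t ht.1 h

/-- Fix `u > 0`. The function
`(c,v) ↦ C_c(u,v) = Γ(c+u, Q⁻¹(u,v)) / Γ(c+u)` is strictly reverse-rule of order infinity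
in `(c,v)`: for `c₁ > ⋯ > c_r > 0` and `1 > v₁ > ⋯ > v_r > 0`, writing `q_j > 0` for the
unique point with `Q(u, q_j) = v_j` (where `Q(u,q) = Γ(u,q)/Γ(u)` and `Γ(u) = Γ(u,0)`),
the quantity `(−1)^{r(r−1)/2} · det((C_{c_i}(u,v_j)))` is strictly positive. -/
theorem stmt_10 (u : ℝ) (hu : 0 < u) :
    ∀ r : ℕ, 1 ≤ r → ∀ c v q : Fin r → ℝ,
      (∀ i : Fin r, 0 < c i) →
      (∀ i j : Fin r, i < j → c j < c i) →
      (∀ j : Fin r, 0 < v j) → (∀ j : Fin r, v j < 1) →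
      (∀ i j : Fin r, i < j → v j < v i) →
      (∀ j : Fin r, 0 < q j) →
      (∀ j : Fin r, upperGamma u (q j) / upperGamma u 0 = v j) →
      0 < (-1 : ℝ) ^ (r * (r - 1) / 2) *
        Matrix.det (Matrix.of fun i j : Fin r =>
          upperGamma (c i + u) (q j) / upperGamma (c i + u) 0) := by
  intro r _ c v q hc hca hv0 hv1 hva hq hqv
  have hΓ : ∀ s : ℝ, 0 < s → 0 < upperGamma s 0 := fun s hs => by
    rw [ug_zero hs]; exact Real.Gamma_pos_of_pos hs
  have hqm : StrictMono q := by
    intro i j hij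
    by_contra hcon
    have h1 := ug_anti hu (hq j) (not_lt.1 hcon)
    have h2 := hva i j hij
    rw [← hqv, ← hqv, div_lt_div_iff_of_pos_right (hΓ u hu)] at h2
    linarith
  have hp : ∀ i, 0 < c i + u := fun i => add_pos (hc i) hu
  have h := det_sign r (fun i => c i + u) q hp
    (fun i j hij => by have := hca i j hij; simp only; linarith) hqm hq
  have hd : Matrix.det (Matrix.of fun i j : Fin r =>
      upperGamma (c i + u) (q j) / upperGamma (c i + u) 0) =
      (∏ i, (upperGamma (c i + u) 0)⁻¹) *
      Matrix.det (Matrix.of fun i j : Fin r => upperGamma (c i + u) (q j)) := by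
    rw [← Matrix.det_mul_column]
    congr 1
    ext i j
    simp [div_eq_inv_mul]
  rw [hd, mul_left_comm]
  exact mul_pos (Finset.prod_pos fun i _ => inv_pos.2 (hΓ _ (hp i))) h
end

section
/- The weight function w₃(λ,x) = 1 − e^{−x/λ} is strictly totally positive of order infinity on (0,∞)²: for every r ≥ 1 and all λ₁ > λ₂ > ⋯ > λ_r > 0 and x₁ > x₂ > ⋯ > x_r > 0, the r×r determinant det( (1 − e^{−x_j/λ_i})_{i,j=1}^r ) is strictly positive. -/
theorem expsum_zero (n : ℕ) : ∀ b z c : Fin n → ℝ, StrictAnti b → StrictAnti z →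
    (∀ j, ∑ i, c i * Real.exp (b i * z j) = 0) → c = 0 := by
  induction n with
  | zero => intro b z c _ _ _; exact Subsingleton.elim _ _
  | succ n ih =>
    intro b z c hb hz h
    have hg : ∀ j, ∑ i, c i * Real.exp ((b i - b 0) * z j) = 0 := by
      intro j
      have h1 : ∑ i, c i * Real.exp ((b i - b 0) * z j)
          = Real.exp (-(b 0 * z j)) * ∑ i, c i * Real.exp (b i * z j) := by
        rw [Finset.mul_sum]
        refine Finset.sum_congr rfl fun i _ => ?_
        rw [sub_mul, sub_eq_add_neg, Real.exp_add]; ring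
      rw [h1, h j, mul_zero]
    have hd : ∀ y : ℝ, HasDerivAt (fun y : ℝ => ∑ i, c i * Real.exp ((b i - b 0) * y))
        (∑ i, c i * (Real.exp ((b i - b 0) * y) * ((b i - b 0) * 1))) y := by
      intro y
      refine HasDerivAt.fun_sum fun i _ => ?_
      exact (((hasDerivAt_id y).const_mul (b i - b 0)).exp).const_mul (c i)
    have hrolle : ∀ j : Fin n, ∃ w ∈ Set.Ioo (z j.succ) (z j.castSucc),
        ∑ i, c i * (Real.exp ((b i - b 0) * w) * ((b i - b 0) * 1)) = 0 := by
      intro j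
      refine exists_hasDerivAt_eq_zero
        (f := fun y : ℝ => ∑ i, c i * Real.exp ((b i - b 0) * y)) (hz Fin.castSucc_lt_succ) ?_ ?_ ?_
      · exact fun y _ => (hd y).continuousAt.continuousWithinAt
      · simp only [hg]
      · exact fun y _ => hd y
    choose w hw hw0 using hrolle
    have hwa : StrictAnti w := by
      intro i j hij
      refine (hw j).2.trans (lt_of_le_of_lt ?_ (hw i).1)
      exact hz.antitone (Fin.succ_le_castSucc_iff.2 hij)
    have hc := ih (fun i => b i.succ - b 0) w (fun i => c i.succ * (b i.succ - b 0))
      (fun i j hij => sub_lt_sub_right (hb (Fin.succ_lt_succ_iff.2 hij)) _) hwa (by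
        intro j
        have := hw0 j
        rw [Fin.sum_univ_succ] at this
        simp only [sub_self, zero_mul, mul_zero, zero_add] at this
        rw [← this]
        refine Finset.sum_congr rfl fun i _ => ?_
        ring)
    have hs : ∀ i : Fin n, c i.succ = 0 := by
      intro i
      have h1 := congrFun hc i
      simp only [Pi.zero_apply] at h1
      have h2 : b i.succ < b 0 := hb (Fin.succ_pos i)
      rcases mul_eq_zero.1 h1 with h3 | h3
      · exact h3
      · linarith
    have h0 : c 0 = 0 := by
      have := hg 0
      rw [Fin.sum_univ_succ] at this
      simpa [hs] using this
    funext i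
    refine Fin.cases h0 hs i

theorem expdet_ne (n : ℕ) (b y : Fin n → ℝ) (hb : StrictAnti b) (hy : StrictAnti y) :
    (Matrix.of fun i j : Fin n => Real.exp (b i * y j)).det ≠ 0 := by
  intro h
  obtain ⟨v, hv, hv0⟩ := Matrix.exists_vecMul_eq_zero_iff.2 h
  refine hv (expsum_zero n b y v hb hy fun j => ?_)
  have := congrFun hv0 j
  simpa [Matrix.vecMul, dotProduct] using this

theorem expdet_pos (n : ℕ) : ∀ b y : Fin n → ℝ, StrictAnti b → StrictAnti y →
    0 < (Matrix.of fun i j : Fin n => Real.exp (b i * y j)).det := by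
  induction n with
  | zero => intro b y _ _; simp
  | succ n ih =>
    intro b y hb hy
    set m : Fin (n + 1) → ℝ := fun i => (-1) ^ (i : ℕ) *
      ((Matrix.of fun i j : Fin (n + 1) => Real.exp (b i * y j)).submatrix
        i.succAbove Fin.succ).det with hm
    have hm0 : 0 < m 0 := by
      have := ih (fun i => b i.succ) (fun i => y i.succ)
        (fun i j hij => hb (Fin.succ_lt_succ_iff.2 hij))
        (fun i j hij => hy (Fin.succ_lt_succ_iff.2 hij))
      simpa [hm, Matrix.submatrix] using this
    set F : ℝ → ℝ := fun t => ∑ i, m i * Real.exp (b i * t) with hF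
    have hdet : ∀ t, (Matrix.of fun i j : Fin (n + 1) =>
        Real.exp (b i * (Fin.cons t (fun k => y k.succ) : Fin (n + 1) → ℝ) j)).det = F t := by
      intro t
      rw [Matrix.det_succ_column_zero]
      refine Finset.sum_congr rfl fun i _ => ?_
      simp only [hm, Matrix.of_apply, Fin.cons_zero]
      have : ((Matrix.of fun i j : Fin (n + 1) =>
        Real.exp (b i * (Fin.cons t (fun k => y k.succ) : Fin (n + 1) → ℝ) j)).submatrix
          i.succAbove Fin.succ) = ((Matrix.of fun i j : Fin (n + 1) =>
          Real.exp (b i * y j)).submatrix i.succAbove Fin.succ) := by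
        ext a c; simp
      rw [this]; ring
    have hy0 : (Fin.cons (y 0) (fun k => y k.succ) : Fin (n + 1) → ℝ) = y := Fin.cons_self_tail y
    have hne : ∀ t, y 0 ≤ t → F t ≠ 0 := by
      intro t ht
      rw [← hdet]
      refine expdet_ne _ b _ hb ?_
      intro i j
      refine Fin.cases ?_ (fun i => ?_) i <;> refine Fin.cases ?_ (fun j => ?_) j
      · intro h; exact absurd h (lt_irrefl _)
      · intro h
        simpa using (hy (Fin.succ_pos j)).trans_le ht
      · intro h; exact absurd h (Fin.not_lt_zero _)
      · intro h
        simpa using hy h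
    have hcont : Continuous F := by
      rw [hF]; fun_prop
    have hlim : Filter.Tendsto (fun t => ∑ i, m i * Real.exp ((b i - b 0) * t)) Filter.atTop
        (nhds (∑ i : Fin (n + 1), if i = 0 then m 0 else 0)) := by
      refine tendsto_finsetSum _ fun i _ => ?_
      by_cases hi : i = 0
      · subst hi; simp
      · have hlt : b i - b 0 < 0 := sub_neg.2 (hb (Fin.pos_of_ne_zero hi))
        have h1 : Filter.Tendsto (fun t : ℝ => (b i - b 0) * t) Filter.atTop Filter.atBot :=
          Filter.tendsto_id.const_mul_atTop_of_neg hlt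
        simpa [hi] using (Real.tendsto_exp_atBot.comp h1).const_mul (m i)
    have hev : ∀ᶠ t in Filter.atTop, 0 < F t := by
      have h1 : 0 < ∑ i : Fin (n + 1), if i = 0 then m 0 else 0 := by simpa using hm0
      filter_upwards [hlim.eventually (lt_mem_nhds h1)] with t ht
      have h2 : F t = Real.exp (b 0 * t) * ∑ i, m i * Real.exp ((b i - b 0) * t) := by
        rw [Finset.mul_sum]
        refine Finset.sum_congr rfl fun i _ => ?_
        have : b i * t = b 0 * t + (b i - b 0) * t := by ring
        rw [this, Real.exp_add]; ring
      rw [h2]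
      exact mul_pos (Real.exp_pos _) ht
    obtain ⟨T, hT, hTy⟩ := (hev.and (Filter.eventually_ge_atTop (y 0))).exists
    have hgoal : 0 < F (y 0) := by
      by_contra hneg
      push Not at hneg
      obtain ⟨s, hs, hs0⟩ := intermediate_value_Icc hTy hcont.continuousOn ⟨hneg, hT.le⟩
      exact hne s hs.1 hs0
    rw [← hdet, hy0] at hgoal
    exact hgoal

/-- The Kamps weight function `w₃(λ,x) = 1 − e^{−x/λ}` is strictly
totally positive of order infinity on `(0,∞)²`. -/
theorem stmt_12 :
    ∀ r : ℕ, 1 ≤ r → ∀ lam x : Fin r → ℝ,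
      (∀ i : Fin r, 0 < lam i) → (∀ j : Fin r, 0 < x j) →
      (∀ i j : Fin r, i < j → lam j < lam i) →
      (∀ i j : Fin r, i < j → x j < x i) →
      0 < Matrix.det (Matrix.of fun i j : Fin r =>
        1 - Real.exp (-(x j) / lam i)) := by
  intro r _ lam x hl hx hla hxa
  set b : Fin (r + 1) → ℝ := Fin.cons 0 (fun i => -(lam i)⁻¹) with hb
  set y : Fin (r + 1) → ℝ := Fin.snoc x 0 with hy
  have hba : StrictAnti b := by
    intro i j
    refine Fin.cases ?_ (fun i => ?_) i <;> refine Fin.cases ?_ (fun j => ?_) j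
    · intro h; exact absurd h (lt_irrefl _)
    · intro h
      simpa [hb] using hl j
    · intro h; exact absurd h (Fin.not_lt_zero _)
    · intro h
      have := hla i j (Fin.succ_lt_succ_iff.1 h)
      simp only [hb, Fin.cons_succ, neg_lt_neg_iff]
      exact inv_strictAnti₀ (hl j) this
  have hya : StrictAnti y := by
    intro i j
    refine Fin.lastCases ?_ (fun i => ?_) i <;> refine Fin.lastCases ?_ (fun j => ?_) j
    · intro h; exact absurd h (lt_irrefl _)
    · intro h; exact absurd h (not_lt.2 (Fin.le_last _))
    · intro h
      simpa [hy] using hx i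
    · intro h
      simpa [hy] using hxa i j (Fin.castSucc_lt_castSucc_iff.1 h)
  have hpos := expdet_pos (r + 1) b y hba hya
  set B : Matrix (Fin (r + 1)) (Fin (r + 1)) ℝ :=
    Matrix.of fun i j => Real.exp (b i * y j) - (if i = 0 then 0 else 1) with hB
  have hdet : (Matrix.of fun i j : Fin (r + 1) => Real.exp (b i * y j)).det = B.det := by
    refine Matrix.det_eq_of_forall_row_eq_smul_add_const (fun i => if i = 0 then 0 else 1) 0
      (by simp) fun i j => ?_
    simp [hB, hb]
  rw [hdet, Matrix.det_succ_column B (Fin.last r), Fin.sum_univ_succ] at hpos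
  have hB0 : B 0 (Fin.last r) = 1 := by simp [hB, hy]
  have hBs : ∀ i : Fin r, B i.succ (Fin.last r) = 0 := by intro i; simp [hB, hy]
  have hsub : B.submatrix (Fin.succAbove 0) (Fin.last r).succAbove =
      -(Matrix.of fun i j : Fin r => 1 - Real.exp (-(x j) / lam i)) := by
    ext i j
    simp [hB, hb, hy, div_eq_mul_inv, mul_comm]
  simp only [hB0, hBs, hsub, Matrix.det_neg] at hpos
  simpa [← mul_assoc, ← mul_pow] using hpos
end

section
/- For each integer k ≥ 0, define the weight function w_{3,k}(λ,x) = k!·[1 − e^{−x/λ} · Σ_{j=0}^{k} (x/λ)^j / j!] for λ, x > 0. Then w_{3,k} is strictly totally positive of order infinity on (0,∞)²: for every r ≥ 1 and all λ₁ > λ₂ > ⋯ > λ_r > 0 and x₁ > x₂ > ⋯ > x_r > 0, the r×r determinant det( (w_{3,k}(λ_i,x_j))_{i,j=1}^r ) is strictly positive. -/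
open Matrix in
/-- One-column mean value theorem for determinants. -/
lemma det_mvt_col {n : ℕ} (f f' : Fin n → ℝ → ℝ) (hf : ∀ i t, HasDerivAt (f i) (f' i t) t)
    (M : Matrix (Fin n) (Fin n) ℝ) (j : Fin n) (a b : ℝ) (hab : a < b)
    : ∃ u, a < u ∧ u < b ∧ (M.updateCol j (fun i => f i b - f i a)).det =
      (b - a) * (M.updateCol j (fun i => f' i u)).det := by
  have key : ∀ v : Fin n → ℝ, (M.updateCol j v).det = ∑ i, M.adjugate j i * v i := by
    intro v
    rw [← Matrix.cramer_apply, Matrix.cramer_eq_adjugate_mulVec]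
    rfl
  have hd : ∀ t, HasDerivAt (fun t => ∑ i, M.adjugate j i * f i t)
      (∑ i, M.adjugate j i * f' i t) t := by
    intro t
    exact HasDerivAt.fun_sum fun i _ => (hf i t).const_mul _
  obtain ⟨u, hu, h⟩ := exists_hasDerivAt_eq_slope _ _ hab
    (fun t _ => (hd t).continuousAt.continuousWithinAt) (fun t _ => hd t)
  refine ⟨u, hu.1, hu.2, ?_⟩
  rw [key, key, h]
  have : b - a ≠ 0 := by linarith
  field_simp
  rw [← Finset.sum_sub_distrib]
  exact Finset.sum_congr rfl fun i _ => by ring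

/-- Mean value theorem for determinants, all columns. -/
lemma det_mvt {n : ℕ} (f f' : Fin n → ℝ → ℝ) (hf : ∀ i t, HasDerivAt (f i) (f' i t) t)
    (a b : Fin n → ℝ) (hab : ∀ j, a j < b j) :
    ∃ u : Fin n → ℝ, (∀ j, a j < u j ∧ u j < b j) ∧
      (Matrix.of fun i j => f i (b j) - f i (a j)).det =
      (∏ j, (b j - a j)) * (Matrix.of fun i j => f' i (u j)).det := by
  have main : ∀ S : Finset (Fin n), ∃ u : Fin n → ℝ, (∀ j, a j < u j ∧ u j < b j) ∧
      (Matrix.of fun i j => f i (b j) - f i (a j)).det =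
      (∏ j ∈ S, (b j - a j)) *
        (Matrix.of fun i j => if j ∈ S then f' i (u j) else f i (b j) - f i (a j)).det := by
    intro S
    induction S using Finset.induction_on with
    | empty =>
      refine ⟨fun j => (a j + b j) / 2, fun j => ?_, by simp⟩
      have := hab j
      constructor <;> linarith
    | insert j0 S hj ih =>
      obtain ⟨u, hu, h⟩ := ih
      obtain ⟨v, hv1, hv2, hv⟩ := det_mvt_col f f' hf
        (Matrix.of fun i j => if j ∈ S then f' i (u j) else f i (b j) - f i (a j)) j0
        (a j0) (b j0) (hab j0)
      refine ⟨Function.update u j0 v, fun j => ?_, ?_⟩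
      · by_cases hjj : j = j0
        · subst hjj; simp [hv1, hv2]
        · simp [hjj, hu j]
      · rw [h, Finset.prod_insert hj, mul_comm (b j0 - a j0), mul_assoc]
        congr 1
        convert hv using 2
        · congr 1
          ext i j
          by_cases hjj : j = j0
          · subst hjj; simp [hj]
          · simp [hjj]
        · congr 1
          ext i j
          by_cases hjj : j = j0
          · subst hjj; simp
          · simp [hjj]
  obtain ⟨u, hu, h⟩ := main Finset.univ
  exact ⟨u, hu, by simpa using h⟩

/-- The kernel `exp (a u)` is strictly totally positive. -/
lemma det_exp_pos : ∀ (n : ℕ) (a u : Fin n → ℝ), StrictMono a → StrictMono u →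
    0 < (Matrix.of fun i j => Real.exp (a i * u j)).det := by
  intro n
  induction n with
  | zero => intro a u _ _; simp
  | succ n ih =>
    intro a u ha hu
    set A : Matrix (Fin (n+1)) (Fin (n+1)) ℝ :=
      Matrix.of fun i j => Real.exp ((a i - a 0) * u j) with hA
    set B : Matrix (Fin (n+1)) (Fin (n+1)) ℝ :=
      Matrix.of fun i j => Fin.cases (Real.exp ((a i - a 0) * u 0))
        (fun j => Real.exp ((a i - a 0) * u j.succ) - Real.exp ((a i - a 0) * u j.castSucc)) j
      with hB
    have h1 : (Matrix.of fun i j => Real.exp (a i * u j)).det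
        = (∏ j, Real.exp (a 0 * u j)) * A.det := by
      rw [← Matrix.det_mul_row]
      congr 1
      ext i j
      simp only [hA, Matrix.of_apply]
      rw [← Real.exp_add]
      ring_nf
    have h2 : A.det = B.det := by
      apply Matrix.det_eq_of_forall_col_eq_smul_add_pred (fun _ => 1)
      · intro i; simp [hA, hB]
      · intro i j; simp [hA, hB]
    have h3 : B.det = (Matrix.of fun i j : Fin n =>
        Real.exp ((a i.succ - a 0) * u j.succ) - Real.exp ((a i.succ - a 0) * u j.castSucc)).det := by
      rw [Matrix.det_succ_row_zero, Fin.sum_univ_succ]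
      simp only [hB, Matrix.of_apply]
      simp
      rfl
    obtain ⟨v, hv, h4⟩ := det_mvt (fun (i : Fin n) t => Real.exp ((a i.succ - a 0) * t))
      (fun i t => (a i.succ - a 0) * Real.exp ((a i.succ - a 0) * t))
      (fun i t => by
        have := ((hasDerivAt_id t).const_mul (a i.succ - a 0)).exp
        simpa [mul_comm] using this)
      (fun j => u j.castSucc) (fun j => u j.succ) (fun j => hu (Fin.castSucc_lt_succ))
    rw [h1, h2, h3, h4]
    have h5 := Matrix.det_mul_column (fun i : Fin n => a i.succ - a 0)
      (Matrix.of fun i j : Fin n => Real.exp ((a i.succ - a 0) * v j))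
    simp only [Matrix.of_apply] at h5
    rw [h5]
    have h6 := ih (fun i => a i.succ - a 0) v
      (fun i j hij => by
        have := ha (Fin.succ_lt_succ_iff.2 hij)
        simp only; linarith)
      (fun i j hij => by
        have h7 : u i.succ ≤ u j.castSucc := hu.monotone (by
          rw [Fin.le_def]; simp; exact hij)
        exact ((hv i).2.trans_le h7).trans (hv j).1)
    have h8 : 0 < ∏ j, Real.exp (a 0 * u j) := Finset.prod_pos fun _ _ => Real.exp_pos _
    have h9 : 0 < ∏ j : Fin n, (u j.succ - u j.castSucc) :=
      Finset.prod_pos fun j _ => sub_pos.2 (hu Fin.castSucc_lt_succ)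
    have h10 : 0 < ∏ i : Fin n, (a i.succ - a 0) :=
      Finset.prod_pos fun i _ => sub_pos.2 (ha (Fin.succ_pos i))
    positivity

/-- Derivative of the weight. -/
lemma weight_deriv (k : ℕ) (t : ℝ) :
    HasDerivAt (fun t => (Nat.factorial k : ℝ) * (1 - Real.exp (-t) *
      ∑ p ∈ Finset.range (k + 1), t ^ p / (Nat.factorial p : ℝ))) (t ^ k * Real.exp (-t)) t := by
  induction k with
  | zero =>
    have := ((hasDerivAt_id t).neg.exp).const_sub 1
    simpa using this
  | succ k ih =>
    have h1 := (((hasDerivAt_id t).neg.exp).mul (hasDerivAt_pow (k+1) t))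
    have h2 := (ih.const_mul ((k:ℝ)+1)).sub h1
    refine (h2.congr_deriv ?_).congr_of_eventuallyEq (Filter.Eventually.of_forall fun s => ?_)
    · simp
      ring
    · simp only [Pi.sub_apply, Pi.mul_apply, Pi.neg_apply, id]
      rw [Finset.sum_range_succ _ (k+1)]
      have : (Nat.factorial k : ℝ) ≠ 0 := by positivity
      simp only [Nat.factorial_succ, Nat.cast_mul, Nat.cast_add, Nat.cast_one]
      field_simp
      ring

lemma main_inc (k : ℕ) (n : ℕ) (lam x : Fin (n+1) → ℝ) (hl : ∀ i, 0 < lam i) (hx : ∀ i, 0 < x i)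
    (hlm : StrictMono lam) (hxm : StrictMono x) :
    0 < Matrix.det (Matrix.of fun i j : Fin (n+1) =>
        (Nat.factorial k : ℝ) *
          (1 - Real.exp (-(x j) / lam i) *
            ∑ p ∈ Finset.range (k + 1), (x j / lam i) ^ p / (Nat.factorial p : ℝ))) := by
  set F : ℝ → ℝ := fun t => (Nat.factorial k : ℝ) * (1 - Real.exp (-t) *
      ∑ p ∈ Finset.range (k + 1), t ^ p / (Nat.factorial p : ℝ)) with hF
  have hF0 : F 0 = 0 := by
    simp [hF, Finset.sum_range_succ']
  have hFd : ∀ t, HasDerivAt F (t ^ k * Real.exp (-t)) t := weight_deriv k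
  let y : Fin (n+1) → ℝ := Fin.cons 0 (fun j : Fin n => x j.castSucc)
  have hy : ∀ i j, i < j → x i ≤ y j := by
    intro i j hij
    cases j using Fin.cases with
    | zero => exact absurd hij (Fin.not_lt_zero i)
    | succ j =>
      simp only [y, Fin.cons_succ]
      exact hxm.monotone (Fin.le_castSucc_iff.2 hij)
  have hyx : ∀ j, 0 ≤ y j ∧ y j < x j := by
    intro j
    cases j using Fin.cases with
    | zero => exact ⟨le_refl _, hx 0⟩
    | succ j => exact ⟨(hx _).le, hxm Fin.castSucc_lt_succ⟩
  have h0 : (Matrix.of fun i j : Fin (n+1) =>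
        (Nat.factorial k : ℝ) *
          (1 - Real.exp (-(x j) / lam i) *
            ∑ p ∈ Finset.range (k + 1), (x j / lam i) ^ p / (Nat.factorial p : ℝ)))
      = Matrix.of fun i j => F (x j / lam i) := by
    ext i j
    simp [hF, neg_div]
  have h1 : (Matrix.of fun i j : Fin (n+1) => F (x j / lam i)).det =
      (Matrix.of fun i j : Fin (n+1) => F (x j / lam i) - F (y j / lam i)).det := by
    apply Matrix.det_eq_of_forall_col_eq_smul_add_pred (fun _ => 1)
    · intro i; simp [y, hF0]
    · intro i j; simp [y]
  obtain ⟨v, hv, h2⟩ := det_mvt (fun i t => F (t / lam i))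
    (fun i t => (1 / lam i) ^ (k+1) * (t ^ k * Real.exp ((-(1 / lam i)) * t)))
    (fun i t => by
      have := (hFd (t / lam i)).comp t ((hasDerivAt_id t).div_const (lam i))
      refine this.congr_deriv ?_
      simp only [div_pow, pow_succ]
      rw [show -(1 / lam i) * t = -(t / lam i) by ring]
      have := (hl i).ne'
      field_simp
      try simp) y x (fun j => (hyx j).2)
  rw [h0, h1, h2]
  have h3 := Matrix.det_mul_column (fun i => (1 / lam i) ^ (k+1))
      (Matrix.of fun i j => v j ^ k * Real.exp ((-(1 / lam i)) * v j))
  have h4 := Matrix.det_mul_row (fun j => v j ^ k)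
      (Matrix.of fun i j => Real.exp ((-(1 / lam i)) * v j))
  simp only [Matrix.of_apply] at h3 h4
  rw [h3, h4]
  have h5 := det_exp_pos (n+1) (fun i => -(1 / lam i)) v
    (fun i j hij => neg_lt_neg (one_div_lt_one_div_of_lt (hl i) (hlm hij)))
    (fun i j hij => ((hv i).2.trans_le (hy i j hij)).trans (hv j).1)
  have h6 : 0 < ∏ j, (x j - y j) := Finset.prod_pos fun j _ => sub_pos.2 (hyx j).2
  have h7 : 0 < ∏ i, (1 / lam i) ^ (k+1) :=
    Finset.prod_pos fun i _ => pow_pos (one_div_pos.2 (hl i)) _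
  have h8 : 0 < ∏ j, v j ^ k :=
    Finset.prod_pos fun j _ => pow_pos ((hyx j).1.trans_lt (hv j).1) _
  positivity

/-- For each integer `k ≥ 0`, the weight function
`w_{3,k}(λ,x) = k!·[1 − e^{−x/λ} Σ_{j=0}^k (x/λ)^j / j!]` is strictly totally positive of
order infinity on `(0,∞)²`. -/
theorem stmt_13 (k : ℕ) :
    ∀ r : ℕ, 1 ≤ r → ∀ lam x : Fin r → ℝ,
      (∀ i : Fin r, 0 < lam i) → (∀ j : Fin r, 0 < x j) →
      (∀ i j : Fin r, i < j → lam j < lam i) →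
      (∀ i j : Fin r, i < j → x j < x i) →
      0 < Matrix.det (Matrix.of fun i j : Fin r =>
        (Nat.factorial k : ℝ) *
          (1 - Real.exp (-(x j) / lam i) *
            ∑ p ∈ Finset.range (k + 1), (x j / lam i) ^ p / (Nat.factorial p : ℝ))) := by
  intro r hr lam x hl hx hlm hxm
  obtain ⟨n, rfl⟩ : ∃ n, r = n + 1 := ⟨r - 1, by omega⟩
  have h := main_inc k n (fun i => lam i.rev) (fun i => x i.rev) (fun i => hl _) (fun i => hx _)
    (fun i j hij => hlm _ _ (Fin.rev_lt_rev.2 hij)) (fun i j hij => hxm _ _ (Fin.rev_lt_rev.2 hij))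
  rw [← Matrix.det_submatrix_equiv_self Fin.revPerm]
  exact h
end

section
/- For each integer k ≥ 0 and u > 0, let B_k(u) = e^{−u} Σ_{m=0}^∞ (u^m/m!)·m^k denote the k-th Bell (exponential) polynomial, equal to the k-th moment of a Poisson random variable with mean u. Then (k,u) ↦ B_k(u) is strictly totally positive of order infinity: for every r ≥ 1, all integers k₁ > k₂ > ⋯ > k_r ≥ 0, and all reals u₁ > u₂ > ⋯ > u_r > 0, the r×r determinant det( (B_{k_i}(u_j))_{i,j=1}^r ) is strictly positive. -/
/-- The `k`-th Bell (exponential) polynomial evaluated at `u`: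
`B_k(u) = e^{−u} Σ_{m=0}^∞ (u^m/m!) m^k`, the `k`-th moment of a Poisson distribution
with mean `u` (with the convention `0^0 = 1`). -/
noncomputable def bellPoly (k : ℕ) (u : ℝ) : ℝ :=
  Real.exp (-u) * ∑' m : ℕ, u ^ m / (Nat.factorial m : ℝ) * (m : ℝ) ^ k

open Polynomial in
lemma sv_lt_card (n : ℕ) : ∀ P : ℝ[X], P ≠ 0 → P.support.card = n →
    P.signVariations + 1 ≤ n := by
  induction n with
  | zero => intro P hP h; simp_all
  | succ n ih =>
    intro P hP h
    have h1 := P.signVariations_le_eraseLead_succ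
    have h2 := Polynomial.card_support_eraseLead' h
    by_cases h0 : P.eraseLead = 0
    · have h3 := Polynomial.signVariations_eq_eraseLead_add_ite hP
      have h4 : P.leadingCoeff ≠ 0 := by simpa using hP
      simp [h0, h4] at h3
      omega
    · have := ih _ h0 h2
      omega

open Polynomial in
lemma no_many_roots {r : ℕ} (P : ℝ[X]) (hP : P ≠ 0) (hc : P.support.card ≤ r)
    (y : Fin r → ℝ) (hy : Function.Injective y) (hpos : ∀ j, 0 < y j)
    (hr : ∀ j, P.eval (y j) = 0) : False := by
  have h1 := sv_lt_card _ P hP rfl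
  have h2 := P.roots_countP_pos_le_signVariations
  have h3 : (Finset.univ.image y).val ≤ P.roots := by
    rw [Multiset.le_iff_subset (Finset.nodup _)]
    intro a ha
    simp only [Finset.mem_val, Finset.mem_image, Finset.mem_univ, true_and] at ha
    obtain ⟨j, rfl⟩ := ha
    exact (Polynomial.mem_roots hP).2 (hr j)
  have h4 := Multiset.countP_le_of_le (0 < ·) h3
  rw [(Multiset.countP_eq_card (p := (0 < ·))).2] at h4
  · rw [Finset.card_val, Finset.card_image_of_injective _ hy] at h4
    simp at h4
    omega
  · intro a ha
    simp only [Finset.mem_val, Finset.mem_image, Finset.mem_univ, true_and] at ha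
    obtain ⟨j, rfl⟩ := ha
    exact hpos j

open Polynomial in
lemma gv : ∀ (r : ℕ) (k : Fin r → ℕ) (x : Fin r → ℝ), StrictMono k → StrictMono x →
    (∀ j, 0 < x j) → 0 < (Matrix.of fun i j : Fin r => x j ^ k i).det := by
  intro r
  induction r with
  | zero => intros; simp
  | succ r ih =>
    intro k x hk hx hpos
    set L := Fin.last r with hL
    set c : Fin (r+1) → ℝ := fun i => (-1) ^ (i + L : ℕ) *
      ((Matrix.of fun i j : Fin (r+1) => x j ^ k i).submatrix i.succAbove L.succAbove).det with hc
    set P : ℝ[X] := ∑ i, monomial (k i) (c i) with hPdef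
    have heval : ∀ t, P.eval t =
        (Matrix.of fun i j : Fin (r+1) => (Function.update x L t) j ^ k i).det := by
      intro t
      rw [Matrix.det_succ_column _ L, hPdef, Polynomial.eval_finsetSum]
      refine Finset.sum_congr rfl fun i _ => ?_
      rw [Polynomial.eval_monomial, hc]
      simp only [Matrix.of_apply, Function.update_self]
      have : (Matrix.of fun i j : Fin (r+1) => x j ^ k i).submatrix i.succAbove L.succAbove =
        (Matrix.of fun i j : Fin (r+1) => (Function.update x L t) j ^ k i).submatrix
          i.succAbove L.succAbove := by
        ext a b
        simp [Function.update_of_ne (Fin.succAbove_ne L b)]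
      rw [this]
      ring
    have hcL : 0 < c L := by
      have := ih (fun i => k i.castSucc) (fun j => x j.castSucc)
        (hk.comp Fin.strictMono_castSucc) (hx.comp Fin.strictMono_castSucc) (fun j => hpos _)
      have e : c L = (Matrix.of fun i j : Fin r => x j.castSucc ^ k i.castSucc).det := by
        simp only [hc]
        rw [← two_mul, pow_mul]
        simp only [even_two, Even.neg_pow, one_pow, one_mul]
        congr 1
        ext a b
        simp [hL]
      rw [e]; exact this
    have hcoeff : P.coeff (k L) = c L := by
      rw [hPdef, Polynomial.finsetSum_coeff, Finset.sum_eq_single L]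
      · simp
      · intro b _ hb
        rw [Polynomial.coeff_monomial, if_neg (fun h => hb (hk.injective h))]
      · simp
    have hP0 : P ≠ 0 := by
      rintro h; rw [h] at hcoeff; simp at hcoeff; linarith
    have hdeg : P.natDegree = k L := by
      apply le_antisymm
      · apply Polynomial.natDegree_sum_le_of_forall_le
        intro i _
        exact (Polynomial.natDegree_monomial_le _).trans (hk.monotone (Fin.le_last i))
      · exact Polynomial.le_natDegree_of_ne_zero (by rw [hcoeff]; exact hcL.ne')
    have hlead : P.leadingCoeff = c L := by rw [Polynomial.leadingCoeff, hdeg, hcoeff]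
    have hsupp : P.support.card ≤ r + 1 := by
      have : P.support ⊆ Finset.univ.image k := by
        intro n hn
        by_contra hcon
        rw [Polynomial.mem_support_iff] at hn
        apply hn
        rw [hPdef, Polynomial.finsetSum_coeff]
        refine Finset.sum_eq_zero fun i _ => ?_
        rw [Polynomial.coeff_monomial, if_neg]
        rintro rfl
        exact hcon (by simp)
      refine (Finset.card_le_card this).trans (Finset.card_image_le.trans (by simp))
    have hnoroot : ∀ t, x L ≤ t → P.eval t ≠ 0 := by
      intro t ht h0
      have hy : StrictMono (Function.update x L t) := by
        intro a b hab
        have ha : a ≠ L := fun h => by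
          subst h; exact absurd hab (not_lt.2 (Fin.le_last b))
        rw [Function.update_of_ne ha]
        by_cases hb : b = L
        · subst hb; rw [Function.update_self]; exact (hx hab).trans_le ht
        · rw [Function.update_of_ne hb]; exact hx hab
      refine no_many_roots P hP0 hsupp _ hy.injective ?_ ?_
      · intro j
        by_cases hb : j = L
        · subst hb; rw [Function.update_self]; exact (hpos _).trans_le ht
        · rw [Function.update_of_ne hb]; exact hpos j
      · intro j
        by_cases hb : j = L
        · subst hb; rw [Function.update_self]; exact h0
        · rw [Function.update_of_ne hb, heval]
          apply Matrix.det_zero_of_column_eq hb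
          intro i
          simp [Function.update_of_ne hb]
    have hfin : 0 < P.eval (x L) := by
      by_cases hk0 : k L = 0
      · have : P = C (c L) := by
          rw [Polynomial.eq_C_of_natDegree_eq_zero (hdeg.trans hk0), ← hk0, hcoeff]
        rw [this]; simpa using hcL
      · have ht := P.tendsto_atTop_of_leadingCoeff_nonneg
          (by rw [← Polynomial.natDegree_pos_iff_degree_pos, hdeg]; omega) (by rw [hlead]; exact hcL.le)
        obtain ⟨T, hT, hT2⟩ := ((ht.eventually_gt_atTop 0).and
          (Filter.eventually_ge_atTop (x L))).exists
        by_contra hcon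
        push Not at hcon
        obtain ⟨t, ht1, ht2⟩ := intermediate_value_Icc hT2 P.continuous.continuousOn ⟨hcon, hT.le⟩
        exact hnoroot t ht1.1 ht2
    rw [heval, Function.update_eq_self] at hfin
    exact hfin

lemma gv_nonneg (r : ℕ) (k : Fin r → ℕ) (x : Fin r → ℝ) (hk : StrictMono k) (hx : StrictMono x)
    (hpos : ∀ j, 0 ≤ x j) : 0 ≤ (Matrix.of fun i j : Fin r => x j ^ k i).det := by
  have hcont : Continuous fun e : ℝ => (Matrix.of fun i j : Fin r => (x j + e) ^ k i).det := by
    apply Continuous.matrix_det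
    refine continuous_matrix fun i j => ?_
    simp only [Matrix.of_apply]
    fun_prop
  have h1 := (hcont.tendsto 0).mono_left (nhdsWithin_le_nhds (s := Set.Ioi 0))
  simp only [add_zero] at h1
  refine ge_of_tendsto h1 ?_
  filter_upwards [self_mem_nhdsWithin] with e he
  have he : 0 < e := he
  exact (gv r k (fun j => x j + e) hk (fun a b h => by have := hx h; simpa using this)
    (fun j => by have := hpos j; linarith)).le

noncomputable def wt (u : ℝ) (m : ℕ) : ℝ := u ^ m / (Nat.factorial m : ℝ)

/-- term in the symmetrised Cauchy-Binet sum -/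
noncomputable def cbTerm {r : ℕ} (k : Fin r → ℕ) (u : Fin r → ℝ) (f : Fin r → ℕ) : ℝ :=
  (Matrix.of fun i j : Fin r => wt (u j) (f i)).det *
    (Matrix.of fun i j : Fin r => (f j : ℝ) ^ k i).det

lemma wt_det {r : ℕ} (u : Fin r → ℝ) (f : Fin r → ℕ) :
    (Matrix.of fun i j : Fin r => wt (u j) (f i)).det =
      (∏ i, (1 / (Nat.factorial (f i) : ℝ))) * (Matrix.of fun i j : Fin r => u j ^ f i).det := by
  rw [← Matrix.det_mul_column]
  congr 1
  ext i j
  simp [wt]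
  ring

lemma wt_det_pos {r : ℕ} (u : Fin r → ℝ) (f : Fin r → ℕ) (hu : StrictMono u) (hf : StrictMono f)
    (hpos : ∀ j, 0 < u j) : 0 < (Matrix.of fun i j : Fin r => wt (u j) (f i)).det := by
  rw [wt_det]
  exact mul_pos (Finset.prod_pos fun i _ => by positivity) (gv r f u hf hu hpos)

lemma cbTerm_nonneg {r : ℕ} (k : Fin r → ℕ) (u : Fin r → ℝ) (hk : StrictMono k)
    (hu : StrictMono u) (hpos : ∀ j, 0 < u j) (f : Fin r → ℕ) : 0 ≤ cbTerm k u f := by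
  by_cases hf : Function.Injective f
  · have hs : StrictMono (f ∘ Tuple.sort f) :=
      (Tuple.monotone_sort f).strictMono_of_injective (hf.comp (Equiv.injective _))
    set σ := Tuple.sort f
    have h1 := wt_det_pos u (f ∘ σ) hu hs hpos
    have h2 := gv_nonneg r k (fun j => ((f ∘ σ) j : ℝ)) hk
      (fun a b h => Nat.cast_lt.2 (hs h)) (fun j => by positivity)
    have e1 := Matrix.det_permute σ (Matrix.of fun i j : Fin r => wt (u j) (f i))
    have e2 := Matrix.det_permute' σ (Matrix.of fun i j : Fin r => (f j : ℝ) ^ k i)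
    have h3 := mul_nonneg h1.le h2
    have e3 : (Matrix.of fun i j : Fin r => wt (u j) ((f ∘ σ) i)).det *
        (Matrix.of fun i j : Fin r => (((f ∘ σ) j : ℕ) : ℝ) ^ k i).det = cbTerm k u f := by
      change ((Matrix.of fun i j : Fin r => wt (u j) (f i)).submatrix σ id).det *
        ((Matrix.of fun i j : Fin r => (f j : ℝ) ^ k i).submatrix id σ).det = _
      rw [e1, e2, cbTerm]
      rcases Int.units_eq_one_or (Equiv.Perm.sign σ) with h | h <;> rw [h] <;> simp
    rw [← e3]; exact h3
  · rw [Function.Injective] at hf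
    push Not at hf
    obtain ⟨a, b, hab, hne⟩ := hf
    rw [cbTerm, Matrix.det_zero_of_row_eq hne, zero_mul]
    ext j
    simp [hab]

lemma expand {r : ℕ} (k : Fin r → ℕ) (u : Fin r → ℝ) (N : ℕ) :
    (Matrix.of fun i j : Fin r => ∑ m ∈ Finset.range N, wt (u j) m * (m : ℝ) ^ k i).det =
      ∑ f ∈ Fintype.piFinset (fun _ : Fin r => Finset.range N), (∏ j, wt (u j) (f j)) *
        (Matrix.of fun i j : Fin r => (f j : ℝ) ^ k i).det := by
  rw [← Matrix.det_transpose]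
  have h := MultilinearMap.map_sum_finset
    (Matrix.detRowAlternating (n := Fin r) (R := ℝ)).toMultilinearMap
    (fun (j : Fin r) (m : ℕ) (i : Fin r) => wt (u j) m * (m : ℝ) ^ k i)
    (fun _ => Finset.range N)
  have e : (Matrix.of fun i j : Fin r => ∑ m ∈ Finset.range N, wt (u j) m * (m : ℝ) ^ k i).transpose
      = fun j : Fin r => ∑ m ∈ Finset.range N, fun i : Fin r => wt (u j) m * (m : ℝ) ^ k i := by
    ext j i
    simp [Finset.sum_apply]
  rw [e]
  refine Eq.trans h ?_
  refine Finset.sum_congr rfl fun f _ => ?_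
  rw [← Matrix.det_transpose (Matrix.of fun i j : Fin r => (f j : ℝ) ^ k i),
    ← Matrix.det_mul_column]
  rfl

lemma expand_perm {r : ℕ} (k : Fin r → ℕ) (u : Fin r → ℝ) (N : ℕ) (σ : Equiv.Perm (Fin r)) :
    (Matrix.of fun i j : Fin r => ∑ m ∈ Finset.range N, wt (u j) m * (m : ℝ) ^ k i).det =
      ∑ f ∈ Fintype.piFinset (fun _ : Fin r => Finset.range N),
        ((Equiv.Perm.sign σ : ℤ) : ℝ) * (∏ j, wt (u j) (f (σ j))) *
        (Matrix.of fun i j : Fin r => (f j : ℝ) ^ k i).det := by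
  rw [expand]
  symm
  refine Finset.sum_bij' (fun f _ => f ∘ σ) (fun f _ => f ∘ σ.symm) ?_ ?_ ?_ ?_ ?_
  · intro f hf
    rw [Fintype.mem_piFinset] at hf ⊢
    exact fun a => hf _
  · intro f hf
    rw [Fintype.mem_piFinset] at hf ⊢
    exact fun a => hf _
  · intro f _; ext; simp
  · intro f _; ext; simp
  · intro f _
    have e2 := Matrix.det_permute' σ (Matrix.of fun i j : Fin r => (f j : ℝ) ^ k i)
    change _ = _ * ((Matrix.of fun i j : Fin r => (f j : ℝ) ^ k i).submatrix id σ).det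
    rw [e2]
    simp only [Function.comp_apply]
    ring

lemma expand_sym {r : ℕ} (k : Fin r → ℕ) (u : Fin r → ℝ) (N : ℕ) :
    (Nat.factorial r : ℝ) *
    (Matrix.of fun i j : Fin r => ∑ m ∈ Finset.range N, wt (u j) m * (m : ℝ) ^ k i).det =
      ∑ f ∈ Fintype.piFinset (fun _ : Fin r => Finset.range N), cbTerm k u f := by
  have h := Finset.sum_congr (rfl : (Finset.univ : Finset (Equiv.Perm (Fin r))) = Finset.univ)
    (fun σ _ => expand_perm k u N σ)
  rw [Finset.sum_const, Finset.card_univ, Fintype.card_perm, Fintype.card_fin, nsmul_eq_mul,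
    Finset.sum_comm] at h
  rw [h]
  refine Finset.sum_congr rfl fun f _ => ?_
  rw [← Finset.sum_mul, cbTerm,
    Matrix.det_apply' (Matrix.of fun i j : Fin r => wt (u j) (f i))]
  rfl

lemma wt_summable (u : ℝ) (hu : 0 < u) (k : ℕ) :
    Summable fun m : ℕ => wt u m * (m : ℝ) ^ k := by
  -- m ^ k ≤ k! * e ^ m
  have h1 : Summable fun m : ℕ => (Nat.factorial k : ℝ) * ((u * Real.exp 1) ^ m / (Nat.factorial m : ℝ)) :=
    (Real.summable_pow_div_factorial (u * Real.exp 1)).mul_left _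
  refine Summable.of_nonneg_of_le (fun m => by unfold wt; positivity) (fun m => ?_) h1
  have h2 := Real.pow_div_factorial_le_exp (m : ℝ) (by positivity) k
  rw [div_le_iff₀ (by positivity)] at h2
  have h3 : Real.exp (m : ℝ) = Real.exp 1 ^ m := by rw [← Real.exp_nat_mul, mul_one]
  rw [h3] at h2
  unfold wt
  calc u ^ m / (Nat.factorial m : ℝ) * (m : ℝ) ^ k
      ≤ u ^ m / (Nat.factorial m : ℝ) * (Real.exp 1 ^ m * (Nat.factorial k : ℝ)) := by gcongr
    _ = _ := by rw [mul_pow]; ring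

lemma main_mono {r : ℕ} (k : Fin r → ℕ) (u : Fin r → ℝ) (hk : StrictMono k)
    (hu : StrictMono u) (hpos : ∀ j, 0 < u j) :
    0 < (Matrix.of fun i j : Fin r => bellPoly (k i) (u j)).det := by
  have e : (Matrix.of fun i j : Fin r => bellPoly (k i) (u j)) =
      Matrix.of fun i j : Fin r => Real.exp (-u j) *
        (Matrix.of fun i j : Fin r => ∑' m : ℕ, wt (u j) m * (m : ℝ) ^ k i) i j := by
    rfl
  rw [e, Matrix.det_mul_row]
  refine mul_pos (Finset.prod_pos fun i _ => Real.exp_pos _) ?_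
  set f₀ : Fin r → ℕ := fun i => i + 1
  have hf₀ : StrictMono f₀ := fun a b h => by simpa [f₀] using h
  have hc : 0 < cbTerm k u f₀ := by
    refine mul_pos (wt_det_pos u f₀ hu hf₀ hpos) ?_
    exact gv r k (fun j => (f₀ j : ℝ)) hk (fun a b h => Nat.cast_lt.2 (hf₀ h))
      (fun j => by simp only [f₀]; positivity)
  have hlim : Filter.Tendsto (fun N : ℕ => (Nat.factorial r : ℝ) * (Matrix.of fun i j : Fin r =>
      ∑ m ∈ Finset.range N, wt (u j) m * (m : ℝ) ^ k i).det) Filter.atTop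
      (nhds ((Nat.factorial r : ℝ) *
        (Matrix.of fun i j : Fin r => ∑' m : ℕ, wt (u j) m * (m : ℝ) ^ k i).det)) := by
    refine Filter.Tendsto.const_mul _ ?_
    have hd : Continuous fun A : Matrix (Fin r) (Fin r) ℝ => A.det :=
      Continuous.matrix_det continuous_id
    refine (hd.tendsto _).comp ?_
    refine tendsto_pi_nhds.2 fun i => tendsto_pi_nhds.2 fun j => ?_
    exact (wt_summable (u j) (hpos j) (k i)).hasSum.tendsto_sum_nat
  have hge : cbTerm k u f₀ ≤ (Nat.factorial r : ℝ) *
        (Matrix.of fun i j : Fin r => ∑' m : ℕ, wt (u j) m * (m : ℝ) ^ k i).det := by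
    refine ge_of_tendsto hlim ?_
    filter_upwards [Filter.eventually_ge_atTop (r + 1)] with N hN
    rw [expand_sym]
    refine Finset.single_le_sum (f := cbTerm k u)
      (fun f _ => cbTerm_nonneg k u hk hu hpos f) ?_
    rw [Fintype.mem_piFinset]
    intro a
    simp only [f₀, Finset.mem_range]
    omega
  have := hc.trans_le hge
  exact (mul_pos_iff_of_pos_left (by positivity)).1 this

/-- The kernel `(k,u) ↦ B_k(u)` is strictly totally positive of order
infinity: for all integers `k₁ > ⋯ > k_r ≥ 0` and reals `u₁ > ⋯ > u_r > 0`,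
`det((B_{k_i}(u_j))) > 0`. -/
theorem stmt_14 :
    ∀ r : ℕ, 1 ≤ r → ∀ (k : Fin r → ℕ) (u : Fin r → ℝ),
      (∀ i j : Fin r, i < j → k j < k i) →
      (∀ j : Fin r, 0 < u j) →
      (∀ i j : Fin r, i < j → u j < u i) →
      0 < Matrix.det (Matrix.of fun i j : Fin r => bellPoly (k i) (u j)) := by
  intro r _ k u hk hpos hu
  rw [← Matrix.det_submatrix_equiv_self Fin.revPerm]
  exact main_mono (fun i => k i.rev) (fun j => u j.rev)
    (fun a b h => hk _ _ (Fin.rev_lt_rev.2 h)) (fun a b h => hu _ _ (Fin.rev_lt_rev.2 h))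
    (fun j => hpos _)
end
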